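/- arXiv:2510.25171 — 4 statements merged into one kernel-verified Lean document; each statement's English description precedes it below -/
import Mathlib

section
/- Let ψ : ℝ² → ℝ be a Minkowski norm and φ : ℝ² → ℝ a weak Minkowski norm; set Ω := {x ∈ ℝ² : φ(x) < 1}. Let P : Ω × ℝ² → ℝ be the unique function with P(x,y) = φ(y + P(x,y)•x) for all (x,y) ∈ Ω × ℝ², which is C^∞ on Ω × (ℝ² \ {0}), and define F(x,y) := ψ(y + P(x,y)•x)·(1 + (D_yP)(x,y)(x)) for (x,y) ∈ Ω × (ℝ² \ {0}), where (D_yP)(x,y) is the Fréchet derivative of z ↦ P(x,z) at z = y. Let 𝒪 := {x ∈ Ω : for every y ≠ 0 the second Fréchet derivative of z ↦ F(x,z)² at z = y is positive definite}. Then every connected component of 𝒪 is a convex subset of ℝ². -/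
lemma pd_iff {E : Type*} [NormedAddCommGroup E] [NormedSpace ℝ E]
    (H : E →L[ℝ] E →L[ℝ] ℝ) (hs : ∀ a b, H a b = H b a) (y v : E)
    (hspan : ∀ θ : E, ∃ α β : ℝ, θ = α • y + β • v)
    (hind : ∀ α β : ℝ, α • y + β • v = 0 → β = 0)
    (hyy : 0 < H y y) :
    (∀ θ : E, θ ≠ 0 → 0 < H θ θ) ↔ 0 < H y y * H v v - (H y v) ^ 2 := by
  have key : ∀ α β : ℝ, H (α • y + β • v) (α • y + β • v)
      = α ^ 2 * H y y + 2 * α * β * H y v + β ^ 2 * H v v := by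
    intro α β
    simp only [map_add, map_smul, add_apply, smul_apply, smul_eq_mul, hs v y]
    ring
  constructor
  · intro h
    have h1 := h ((-(H y v)) • y + (H y y) • v) (fun h0 => hyy.ne' (hind _ _ h0))
    rw [key] at h1
    have : 0 < H y y * (H y y * H v v - (H y v) ^ 2) := by nlinarith
    exact (mul_pos_iff_of_pos_left hyy).1 this
  · intro h θ hθ
    obtain ⟨α, β, rfl⟩ := hspan θ
    rw [key]
    have h2 : 0 < H y y * (α ^ 2 * H y y + 2 * α * β * H y v + β ^ 2 * H v v) := by
      have : H y y * (α ^ 2 * H y y + 2 * α * β * H y v + β ^ 2 * H v v)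
        = (α * H y y + β * H y v) ^ 2 + β ^ 2 * (H y y * H v v - (H y v) ^ 2) := by ring
      rw [this]
      by_cases hb : β = 0
      · have ha : α ≠ 0 := by
          rintro rfl
          simp [hb] at hθ
        subst hb
        have : 0 < (α * H y y) ^ 2 := by positivity
        simpa using this
      · positivity
    exact (mul_pos_iff_of_pos_left hyy).1 h2

/-- Euler relations for a function homogeneous of degree 2. -/
lemma euler2 {E : Type*} [NormedAddCommGroup E] [NormedSpace ℝ E]
    (g : E → ℝ) (y : E) (hy : y ≠ 0)
    (hg : ∀ z, z ≠ 0 → DifferentiableAt ℝ g z)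
    (hg2 : DifferentiableAt ℝ (fderiv ℝ g) y)
    (hom : ∀ α : ℝ, 0 < α → ∀ z, z ≠ 0 → g (α • z) = α ^ 2 * g z) :
    fderiv ℝ g y y = 2 * g y ∧ ∀ v, fderiv ℝ (fderiv ℝ g) y y v = fderiv ℝ g y v := by
  have hc : HasDerivAt (fun α : ℝ => α • y) y 1 := by
    simpa using (hasDerivAt_id (1:ℝ)).smul_const y
  have hev : ∀ᶠ α : ℝ in nhds 1, 0 < α := lt_mem_nhds one_pos
  constructor
  · have h1 : HasDerivAt (fun α : ℝ => g (α • y)) (fderiv ℝ g y y) 1 := by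
      have : HasFDerivAt g (fderiv ℝ g y) ((1:ℝ) • y) := by
        rw [one_smul]; exact (hg y hy).hasFDerivAt
      exact this.comp_hasDerivAt 1 hc
    have h2 : HasDerivAt (fun α : ℝ => α ^ 2 * g y) (2 * g y) 1 := by
      simpa using (hasDerivAt_pow 2 (1:ℝ)).mul_const (g y)
    refine h1.unique (h2.congr_of_eventuallyEq ?_)
    filter_upwards [hev] with α hα using hom α hα y hy
  · intro v
    have hsc : ∀ α : ℝ, 0 < α → fderiv ℝ g (α • y) = α • fderiv ℝ g y := by
      intro α hα
      have hne : α • y ≠ 0 := smul_ne_zero hα.ne' hy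
      have a1 : HasFDerivAt (fun z => g (α • z)) (α • fderiv ℝ g (α • y)) y := by
        have := (hg _ hne).hasFDerivAt.comp y ((hasFDerivAt_id y).const_smul α)
        refine this.congr_fderiv ?_
        ext w; simp
      have a2 : HasFDerivAt (fun z => α ^ 2 * g z) (α ^ 2 • fderiv ℝ g y) y :=
        (hg y hy).hasFDerivAt.const_mul _
      have a3 := a1.unique (a2.congr_of_eventuallyEq (by
        filter_upwards [isOpen_ne.mem_nhds hy] with z hz using hom α hα z hz))
      have : α • fderiv ℝ g (α • y) = α • (α • fderiv ℝ g y) := by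
        rw [a3, smul_smul, pow_two]
      exact smul_right_injective _ hα.ne' this
    have h1 : HasDerivAt (fun α : ℝ => fderiv ℝ g (α • y)) (fderiv ℝ (fderiv ℝ g) y y) 1 := by
      have : HasFDerivAt (fderiv ℝ g) (fderiv ℝ (fderiv ℝ g) y) ((1:ℝ) • y) := by
        rw [one_smul]; exact hg2.hasFDerivAt
      exact this.comp_hasDerivAt 1 hc
    have h2 : HasDerivAt (fun α : ℝ => α • fderiv ℝ g y) (fderiv ℝ g y) 1 := by
      simpa using (hasDerivAt_id (1:ℝ)).smul_const (fderiv ℝ g y)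
    rw [h1.unique (h2.congr_of_eventuallyEq (by
      filter_upwards [hev] with α hα using hsc α hα))]

lemma core {E : Type*} [NormedAddCommGroup E] [NormedSpace ℝ E]
    (g : E → ℝ) (ξ e x : E) (x1 x2 : ℝ) (hx : x = x1 • ξ + x2 • e)
    (p p1 p2 s s1 : ℝ → ℝ) (p3 s2 : ℝ)
    (hp : ∀ t, HasDerivAt p (p1 t) t) (hp1 : ∀ t, HasDerivAt p1 (p2 t) t)
    (hp2 : HasDerivAt p2 p3 0)
    (hs : ∀ t, HasDerivAt s (s1 t) t) (hs1 : HasDerivAt s1 s2 0)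
    (D : ℝ → ℝ) (hD : ∀ t, D t = 1 - x1 * (p t - t * p1 t) - x2 * p1 t)
    (hD0 : ∀ t, D t ≠ 0)
    (hne : ∀ t, ξ + t • e - p t • x ≠ 0)
    (hgc : ∀ t, g (ξ + t • e - p t • x) = (s t / D t) ^ 2)
    (hg : ∀ z, z ≠ 0 → DifferentiableAt ℝ g z)
    (hg2 : DifferentiableAt ℝ (fderiv ℝ g) (ξ - p 0 • x))
    (hom : ∀ α : ℝ, 0 < α → ∀ z, z ≠ 0 → g (α • z) = α ^ 2 * g z)
    (H : E →L[ℝ] E →L[ℝ] ℝ) (hH : H = fderiv ℝ (fderiv ℝ g) (ξ - p 0 • x))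
    (y v : E) (hy : y = ξ - p 0 • x) (hv : v = e - p1 0 • x) :
    H y y = 2 * (s 0 / D 0) ^ 2 ∧
    H y y * H v v - (H y v) ^ 2 = 4 * s 0 ^ 3 / D 0 ^ 4 *
      (s2 + (3 * s1 0 * p2 0 + s 0 * p3) * (x2 / D 0) + 3 * s 0 * p2 0 ^ 2 * (x2 / D 0) ^ 2) := by
  have hy0 : y ≠ 0 := by simpa [hy] using hne 0
  rw [← hy] at hg2 hH
  have hgy : g y = (s 0 / D 0) ^ 2 := by simpa [hy] using hgc 0
  obtain ⟨E1, E2⟩ := euler2 g y hy0 hg hg2 hom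
  rw [← hH] at E2
  have hc : ∀ t, HasDerivAt (fun t : ℝ => ξ + t • e - p t • x) (e - p1 t • x) t := by
    intro t
    have h1 := ((hasDerivAt_id t).smul_const e).const_add ξ
    have h2 := h1.sub ((hp t).smul_const x)
    rw [one_smul] at h2
    exact h2
  have hc1 : HasDerivAt (fun t : ℝ => e - p1 t • x) (-(p2 0 • x)) 0 := by
    simpa using ((hp1 0).smul_const x).const_sub e
  set D1 : ℝ → ℝ := fun t => x1 * (t * p2 t) - x2 * p2 t with hD1
  have hDd : ∀ t, HasDerivAt D (D1 t) t := by
    intro t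
    have : D = fun t => 1 - x1 * (p t - t * p1 t) - x2 * p1 t := funext hD
    rw [this]
    have h := ((((hp t).sub ((hasDerivAt_id t).mul (hp1 t))).const_mul x1).const_sub 1).sub
      ((hp1 t).const_mul x2)
    refine h.congr_deriv ?_
    simp [hD1]
  have hD1d : HasDerivAt D1 (x1 * p2 0 - x2 * p3) 0 := by
    have h := (((hasDerivAt_id (0:ℝ)).mul hp2).const_mul x1).sub (hp2.const_mul x2)
    refine h.congr_deriv ?_
    simp
  set h1 : ℝ → ℝ := fun t => 2 * (s t / D t) * ((s1 t * D t - s t * D1 t) / D t ^ 2) with hh1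
  have hhd : ∀ t, HasDerivAt (fun t => (s t / D t) ^ 2) (h1 t) t := by
    intro t
    have h := ((hs t).div (hDd t) (hD0 t)).pow 2
    refine h.congr_deriv ?_
    simp [hh1]
  have hA : ∀ t, fderiv ℝ g (ξ + t • e - p t • x) (e - p1 t • x) = h1 t := by
    intro t
    have a := (hg _ (hne t)).hasFDerivAt.comp_hasDerivAt t (hc t)
    have b := hhd t
    rw [← (funext hgc : (fun t : ℝ => g (ξ + t • e - p t • x)) = _)] at b
    exact a.unique b
  have hB : HasDerivAt (fun t : ℝ => fderiv ℝ g (ξ + t • e - p t • x) (e - p1 t • x))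
      (H v v + fderiv ℝ g y (-(p2 0 • x))) 0 := by
    have e0 : ξ + (0:ℝ) • e - p 0 • x = y := by simp [hy]
    have q : HasFDerivAt (fderiv ℝ g) H (ξ + (0:ℝ) • e - p 0 • x) := by
      rw [e0, hH]; exact hg2.hasFDerivAt
    have a := q.comp_hasDerivAt (0:ℝ) (hc 0)
    have := a.clm_apply hc1
    refine this.congr_deriv ?_
    simp only [Function.comp, e0, ← hv]
  set h2 : ℝ := 2 * ((s1 0 * D 0 - s 0 * D1 0) / D 0 ^ 2) * ((s1 0 * D 0 - s 0 * D1 0) / D 0 ^ 2)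
    + 2 * (s 0 / D 0) * (((s2 * D 0 - s 0 * (x1 * p2 0 - x2 * p3)) * D 0 ^ 2
      - (s1 0 * D 0 - s 0 * D1 0) * (2 * D 0 * D1 0)) / (D 0 ^ 2) ^ 2) with hh2
  have hC : HasDerivAt h1 h2 0 := by
    have a := (((hs 0).div (hDd 0) (hD0 0)).const_mul 2)
    have b := (((hs1.mul (hDd 0)).sub ((hs 0).mul hD1d)).div ((hDd 0).pow 2)
      (pow_ne_zero 2 (hD0 0)))
    have := a.mul b
    refine this.congr_deriv ?_
    simp [hh2]
    left; ring
  have hvv : H v v + fderiv ℝ g y (-(p2 0 • x)) = h2 := by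
    refine hB.unique ?_
    rw [funext hA]; exact hC
  have hyv : H y v = h1 0 := by
    rw [E2, ← hA 0]; simp [hy, hv]
  have hyy : H y y = 2 * (s 0 / D 0) ^ 2 := by rw [E2, E1, hgy]
  refine ⟨hyy, ?_⟩
  have hd := hD0 0
  have hD00 : D 0 = 1 - x1 * p 0 - x2 * p1 0 := by rw [hD]; ring
  have hD10 : D1 0 = - x2 * p2 0 := by simp [hD1]
  have hxx : D 0 • x = x1 • y + x2 • v := by
    rw [hy, hv, hD00]
    have : x1 • (ξ - p 0 • x) + x2 • (e - p1 0 • x)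
      = (x1 • ξ + x2 • e) - (x1 * p 0 + x2 * p1 0) • x := by module
    rw [this, ← hx]; module
  have hdx : D 0 * fderiv ℝ g y x = x1 * (2 * (s 0 / D 0) ^ 2) + x2 * h1 0 := by
    have := congrArg (fderiv ℝ g y) hxx
    simp only [map_add, map_smul, smul_eq_mul] at this
    rw [this, E1, hgy, ← E2, hyv]
  have hdx' : fderiv ℝ g y x = (x1 * (2 * (s 0 / D 0) ^ 2) + x2 * h1 0) / D 0 := by
    rw [eq_div_iff hd, ← hdx]; ring
  have hvv' : H v v = h2 + p2 0 * fderiv ℝ g y x := by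
    rw [← hvv]; simp
  rw [hyy, hyv, hvv', hdx', hh2]
  simp only [hh1, hD10]
  generalize D 0 = d at *
  field_simp
  ring

abbrev E2 := EuclideanSpace ℝ (Fin 2)

lemma contDiffAt_of_on {f : E2 → ℝ} (h : ContDiffOn ℝ (⊤ : ℕ∞) f {y | y ≠ 0}) {y : E2}
    (hy : y ≠ 0) : ContDiffAt ℝ (⊤ : ℕ∞) f y :=
  h.contDiffAt (isOpen_ne.mem_nhds hy)

lemma smooth_line {f : E2 → ℝ} (h : ContDiffOn ℝ (⊤ : ℕ∞) f {y | y ≠ 0}) (ξ e : E2)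
    (hne : ∀ t : ℝ, ξ + t • e ≠ 0) : ContDiff ℝ (⊤ : ℕ∞) (fun t : ℝ => f (ξ + t • e)) := by
  rw [contDiff_iff_contDiffAt]
  intro t
  have h1 : ContDiffAt ℝ (⊤ : ℕ∞) (fun t : ℝ => ξ + t • e) t := by fun_prop
  exact (contDiffAt_of_on h (hne t)).comp t h1

lemma smooth_deriv {f : ℝ → ℝ} (h : ContDiff ℝ (⊤ : ℕ∞) f) :
    ContDiff ℝ (⊤ : ℕ∞) (deriv f) ∧ ∀ t, HasDerivAt f (deriv f t) t := by
  have := contDiff_infty_iff_deriv.1 h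
  exact ⟨this.2, fun t => (this.1 t).hasDerivAt⟩

/-- rotation -/
noncomputable def rot (ξ : E2) : E2 := !₂[-ξ 1, ξ 0]

lemma nsq_pos {ξ : E2} (h : ξ ≠ 0) : 0 < ξ 0 ^ 2 + ξ 1 ^ 2 := by
  by_contra hc
  apply h
  have h0 : ξ 0 = 0 := by nlinarith [sq_nonneg (ξ 0), sq_nonneg (ξ 1)]
  have h1 : ξ 1 = 0 := by nlinarith [sq_nonneg (ξ 0), sq_nonneg (ξ 1)]
  ext i; fin_cases i <;> simp [h0, h1]

noncomputable def co1 (ξ x : E2) : ℝ := (ξ 0 * x 0 + ξ 1 * x 1) / (ξ 0 ^ 2 + ξ 1 ^ 2)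
noncomputable def co2 (ξ x : E2) : ℝ := (ξ 0 * x 1 - ξ 1 * x 0) / (ξ 0 ^ 2 + ξ 1 ^ 2)

lemma co_eq {ξ : E2} (h : ξ ≠ 0) (x : E2) : x = co1 ξ x • ξ + co2 ξ x • rot ξ := by
  have := (nsq_pos h).ne'
  ext i; fin_cases i <;> simp [co1, co2, rot] <;> field_simp <;> ring

lemma co_indep {ξ : E2} (h : ξ ≠ 0) (a b : ℝ) (h0 : a • ξ + b • rot ξ = 0) : a = 0 ∧ b = 0 := by
  have hp := (nsq_pos h).ne'
  have e0 : a * ξ 0 - b * ξ 1 = 0 := by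
    have := congrArg (fun z : E2 => z 0) h0
    simp [rot] at this; linarith
  have e1 : a * ξ 1 + b * ξ 0 = 0 := by
    have := congrArg (fun z : E2 => z 1) h0
    simpa [rot] using this
  constructor
  · have : a * (ξ 0 ^ 2 + ξ 1 ^ 2) = 0 := by linear_combination ξ 0 * e0 + ξ 1 * e1
    exact (mul_eq_zero.1 this).resolve_right hp
  · have : b * (ξ 0 ^ 2 + ξ 1 ^ 2) = 0 := by linear_combination ξ 0 * e1 - ξ 1 * e0
    exact (mul_eq_zero.1 this).resolve_right hp

lemma line_ne {ξ : E2} (h : ξ ≠ 0) (t : ℝ) : ξ + t • rot ξ ≠ 0 := by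
  intro h0
  have := (co_indep h 1 t (by simpa using h0)).1
  norm_num at this

section
variable {φ : E2 → ℝ} (hφhom : ∀ α : ℝ, 0 < α → ∀ y, φ (α • y) = α * φ y)
  (hφpos : ∀ y : E2, y ≠ 0 → 0 < φ y)
  (hφsmooth : ContDiffOn ℝ (⊤ : ℕ∞) φ {y | y ≠ 0})
  (hφsub : ∀ y₁ y₂, φ (y₁ + y₂) ≤ φ y₁ + φ y₂)

include hφhom in
lemma phi_zero : φ 0 = 0 := by
  have := hφhom 2 two_pos 0
  rw [smul_zero] at this; linarith

include hφhom hφsmooth in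
lemma euler1 {ξ : E2} (h : ξ ≠ 0) : fderiv ℝ φ ξ ξ = φ ξ := by
  have hc : HasDerivAt (fun α : ℝ => α • ξ) ξ 1 := by
    simpa using (hasDerivAt_id (1:ℝ)).smul_const ξ
  have h1 : HasDerivAt (fun α : ℝ => φ (α • ξ)) (fderiv ℝ φ ξ ξ) 1 := by
    have : HasFDerivAt φ (fderiv ℝ φ ξ) ((1:ℝ) • ξ) := by
      rw [one_smul]
      exact ((contDiffAt_of_on hφsmooth h).differentiableAt (by simp)).hasFDerivAt
    exact this.comp_hasDerivAt 1 hc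
  have h2 : HasDerivAt (fun α : ℝ => α * φ ξ) (φ ξ) 1 := by
    simpa using (hasDerivAt_id (1:ℝ)).mul_const (φ ξ)
  refine h1.unique (h2.congr_of_eventuallyEq ?_)
  filter_upwards [lt_mem_nhds (one_pos : (0:ℝ) < 1)] with α hα using hφhom α hα ξ

include hφhom hφsmooth hφsub in
lemma dphi_le {ξ : E2} (h : ξ ≠ 0) (x : E2) : fderiv ℝ φ ξ x ≤ φ x := by
  have hc : HasDerivAt (fun t : ℝ => ξ + t • x) x 0 := by
    simpa using ((hasDerivAt_id (0:ℝ)).smul_const x).const_add ξ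
  have h1 : HasDerivAt (fun t : ℝ => φ (ξ + t • x)) (fderiv ℝ φ ξ x) 0 := by
    have : HasFDerivAt φ (fderiv ℝ φ ξ) (ξ + (0:ℝ) • x) := by
      rw [zero_smul, add_zero]
      exact ((contDiffAt_of_on hφsmooth h).differentiableAt (by simp)).hasFDerivAt
    exact this.comp_hasDerivAt 0 hc
  have h2 := h1.tendsto_slope_zero_right
  refine le_of_tendsto h2 ?_
  filter_upwards [self_mem_nhdsWithin] with t ht
  have ht : 0 < t := ht
  have := hφsub ξ (t • x)
  rw [hφhom t ht] at this
  simp only [zero_add, zero_smul, add_zero, smul_eq_mul]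
  rw [inv_mul_le_iff₀ ht]; linarith

include hφhom hφpos in
lemma S_ne {ξ x : E2} (h : ξ ≠ 0) (hx : φ x < 1) : ξ - φ ξ • x ≠ 0 := by
  intro h0
  have hp := hφpos ξ h
  have h1 : φ ξ = φ ξ * φ x := by
    conv_lhs => rw [sub_eq_zero.1 h0]
    exact hφhom _ hp x
  nlinarith

end

theorem key
    (ψ φ : E2 → ℝ)
    (hψhom : ∀ α : ℝ, 0 < α → ∀ y, ψ (α • y) = α * ψ y)
    (hψpos : ∀ y : E2, y ≠ 0 → 0 < ψ y)
    (hψsmooth : ContDiffOn ℝ (⊤ : ℕ∞) ψ {y | y ≠ 0})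
    (hφhom : ∀ α : ℝ, 0 < α → ∀ y, φ (α • y) = α * φ y)
    (hφpos : ∀ y : E2, y ≠ 0 → 0 < φ y)
    (hφsmooth : ContDiffOn ℝ (⊤ : ℕ∞) φ {y | y ≠ 0})
    (hφsub : ∀ y₁ y₂, φ (y₁ + y₂) ≤ φ y₁ + φ y₂)
    (P : E2 → E2 → ℝ)
    (hP : ∀ x, φ x < 1 → ∀ y, P x y = φ (y + P x y • x))
    (hPuniq : ∀ x, φ x < 1 → ∀ y, ∀ t : ℝ, t = φ (y + t • x) → t = P x y)
    (hPsmooth : ContDiffOn ℝ (⊤ : ℕ∞)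
      (fun p : E2 × E2 => P p.1 p.2) ({x | φ x < 1} ×ˢ {y | y ≠ 0}))
    (F : E2 → E2 → ℝ)
    (hF : ∀ x, φ x < 1 → ∀ y : E2, y ≠ 0 →
      F x y = ψ (y + P x y • x) * (1 + fderiv ℝ (fun z => P x z) y x))
    (ξ : E2) (hξ : ξ ≠ 0) :
    ∃ q : ℝ → ℝ, ∀ x, φ x < 1 →
      ((∀ θ : E2, θ ≠ 0 → 0 < iteratedFDeriv ℝ 2 (fun z => F x z ^ 2) (ξ - φ ξ • x) ![θ, θ]) ↔
        0 < q (co2 ξ x / (1 - fderiv ℝ φ ξ x))) := by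
  set e := rot ξ with he
  have hle := line_ne hξ
  rw [← he] at hle
  set p : ℝ → ℝ := fun t => φ (ξ + t • e) with hp
  set s : ℝ → ℝ := fun t => ψ (ξ + t • e) with hs
  obtain ⟨hp1, dp⟩ := smooth_deriv (smooth_line hφsmooth ξ e hle)
  obtain ⟨hp2, dp1⟩ := smooth_deriv hp1
  obtain ⟨hp3, dp2⟩ := smooth_deriv hp2
  obtain ⟨hs1, ds⟩ := smooth_deriv (smooth_line hψsmooth ξ e hle)
  obtain ⟨hs2, ds1⟩ := smooth_deriv hs1
  rw [← hp] at dp dp1 dp2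
  rw [← hs] at ds ds1
  refine ⟨fun r => deriv (deriv s) 0 + (3 * deriv s 0 * deriv (deriv p) 0 +
    s 0 * deriv (deriv (deriv p)) 0) * r + 3 * s 0 * deriv (deriv p) 0 ^ 2 * r ^ 2, ?_⟩
  intro x hx
  -- basic facts
  have hφd : ∀ z : E2, z ≠ 0 → HasFDerivAt φ (fderiv ℝ φ z) z := fun z hz =>
    ((contDiffAt_of_on hφsmooth hz).differentiableAt (by simp)).hasFDerivAt
  have hDpos : ∀ z : E2, z ≠ 0 → 0 < 1 - fderiv ℝ φ z x := fun z hz => by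
    have := dphi_le hφhom hφsmooth hφsub hz x
    linarith
  have hφ0 := phi_zero hφhom
  have hTne : ∀ y : E2, y ≠ 0 → y + P x y • x ≠ 0 := by
    intro y hy h0
    have := hP x hx y
    rw [h0, hφ0] at this
    rw [this] at h0
    simp at h0
    exact hy h0
  have hPs : ContDiffOn ℝ (⊤ : ℕ∞) (P x) {y | y ≠ 0} := by
    have h1 : ContDiffOn ℝ (⊤ : ℕ∞) (fun y : E2 => ((x, y) : E2 × E2)) {y | y ≠ 0} := by
      fun_prop
    exact hPsmooth.comp h1 (fun y hy => ⟨hx, hy⟩)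
  have hPinv : ∀ z : E2, P x (z - φ z • x) = φ z := by
    intro z
    exact (hPuniq x hx _ (φ z) (by simp)).symm
  have hPd : ∀ y : E2, y ≠ 0 → HasFDerivAt (P x) (fderiv ℝ (P x) y) y := fun z hz =>
    ((contDiffAt_of_on hPs hz).differentiableAt (by simp)).hasFDerivAt
  have hfac : ∀ y : E2, y ≠ 0 → (1 + fderiv ℝ (P x) y x) = 1 / (1 - fderiv ℝ φ (y + P x y • x) x) := by
    intro y hy
    have hD := hDpos _ (hTne y hy)
    have hin : HasFDerivAt (fun z : E2 => z + P x z • x)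
        (ContinuousLinearMap.id ℝ E2 + (fderiv ℝ (P x) y).smulRight x) y :=
      (hasFDerivAt_id y).add ((hPd y hy).smul_const x)
    have h1 := (hφd _ (hTne y hy)).comp y hin
    have h3 := hPd y hy
    have h4 := h1.unique (h3.congr_of_eventuallyEq
      (Filter.Eventually.of_forall fun z => (hP x hx z).symm))
    have h5 := congrArg (fun L : E2 →L[ℝ] ℝ => L x) h4
    simp at h5
    rw [eq_div_iff hD.ne']
    linear_combination -h5
  have hFS : ∀ z : E2, z ≠ 0 → F x (z - φ z • x) = ψ z / (1 - fderiv ℝ φ z x) := by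
    intro z hz
    have hne := S_ne hφhom hφpos hz hx
    have hzz : z - φ z • x + P x (z - φ z • x) • x = z := by rw [hPinv]; simp
    rw [hF x hx _ hne, hzz]
    have := hfac _ hne
    rw [hzz] at this
    rw [show (fun z => P x z) = P x from rfl, this]; ring
  -- F x smooth
  have hFs : ContDiffOn ℝ (⊤ : ℕ∞) (F x) {y | y ≠ 0} := by
    have h1 : ContDiffOn ℝ (⊤ : ℕ∞) (fun y : E2 => ψ (y + P x y • x)) {y | y ≠ 0} := by
      refine hψsmooth.comp (contDiffOn_id.add (hPs.smul contDiffOn_const)) ?_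
      intro y hy; exact hTne y hy
    have h2 : ContDiffOn ℝ (⊤ : ℕ∞) (fun y : E2 => fderiv ℝ (P x) y) {y | y ≠ 0} :=
      hPs.fderiv_of_isOpen isOpen_ne (by simp)
    have h3 : ContDiffOn ℝ (⊤ : ℕ∞) (fun y : E2 => ψ (y + P x y • x) * (1 + fderiv ℝ (P x) y x))
        {y | y ≠ 0} := h1.mul (contDiffOn_const.add (h2.clm_apply contDiffOn_const))
    exact h3.congr (fun y hy => hF x hx y hy)
  set g : E2 → ℝ := fun z => F x z ^ 2 with hg
  have hgs : ContDiffOn ℝ (⊤ : ℕ∞) g {y | y ≠ 0} := hFs.pow 2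
  have hgd : ∀ z : E2, z ≠ 0 → DifferentiableAt ℝ g z := fun z hz =>
    (contDiffAt_of_on hgs hz).differentiableAt (by simp)
  have hy0 : ξ - φ ξ • x ≠ 0 := S_ne hφhom hφpos hξ hx
  have hp0 : p 0 = φ ξ := by simp [hp]
  have hg2 : DifferentiableAt ℝ (fderiv ℝ g) (ξ - φ ξ • x) := by
    have h2 : ContDiffOn ℝ (⊤ : ℕ∞) (fun y : E2 => fderiv ℝ g y) {y | y ≠ 0} :=
      hgs.fderiv_of_isOpen isOpen_ne (by simp)
    exact (h2.contDiffAt (isOpen_ne.mem_nhds hy0)).differentiableAt (by simp)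
  have hdhom : ∀ α : ℝ, 0 < α → ∀ z : E2, z ≠ 0 → fderiv ℝ φ (α • z) = fderiv ℝ φ z := by
    intro α hα z hz
    have hne : α • z ≠ 0 := smul_ne_zero hα.ne' hz
    have a1 : HasFDerivAt (fun z => φ (α • z)) (α • fderiv ℝ φ (α • z)) z := by
      have := (hφd _ hne).comp z ((hasFDerivAt_id z).const_smul α)
      refine this.congr_fderiv ?_
      ext w; simp
    have a2 : HasFDerivAt (fun z => α * φ z) (α • fderiv ℝ φ z) z := (hφd z hz).const_mul _
    rw [← (funext (hφhom α hα) : (fun z => φ (α • z)) = _)] at a2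
    exact smul_right_injective _ hα.ne' (a1.unique a2)
  have hom : ∀ α : ℝ, 0 < α → ∀ z, z ≠ 0 → g (α • z) = α ^ 2 * g z := by
    intro α hα z hz
    have hw := hTne z hz
    set w := z + P x z • x with hwdef
    have hzw : z = w - φ w • x := by rw [hwdef, ← hP x hx z]; simp
    have e1 : α • z = (α • w) - φ (α • w) • x := by
      rw [hφhom α hα, hzw]; module
    simp only [hg]
    rw [e1, hFS _ (smul_ne_zero hα.ne' hw), hdhom α hα w hw, hψhom α hα, hzw, hFS w hw]
    ring
  have hx12 := co_eq hξ x
  rw [← he] at hx12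
  have hp1f : ∀ t, deriv p t = fderiv ℝ φ (ξ + t • e) e := by
    intro t
    have hc : HasDerivAt (fun t : ℝ => ξ + t • e) e t := by
      simpa using ((hasDerivAt_id t).smul_const e).const_add ξ
    exact ((hφd _ (hle t)).comp_hasDerivAt t hc).deriv
  have hD : ∀ t : ℝ, 1 - fderiv ℝ φ (ξ + t • e) x =
      1 - co1 ξ x * (p t - t * deriv p t) - co2 ξ x * deriv p t := by
    intro t
    have e1 := euler1 hφhom hφsmooth (hle t)
    have e2 : x = co1 ξ x • ((ξ + t • e) - t • e) + co2 ξ x • e := by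
      rw [add_sub_cancel_right]; exact hx12
    have e3 := congrArg (fderiv ℝ φ (ξ + t • e)) e2
    simp only [map_add, map_smul, map_sub, smul_eq_mul] at e3 e1
    rw [hp1f, e3]
    simp only [hp]
    linear_combination (-co1 ξ x) * e1
  have C := core g ξ e x (co1 ξ x) (co2 ξ x) hx12 p (deriv p) (deriv (deriv p)) s (deriv s)
    _ _ dp dp1 (dp2 0) ds (ds1 0) (fun t => 1 - fderiv ℝ φ (ξ + t • e) x) hD
    (fun t => (hDpos _ (hle t)).ne')
    (fun t => S_ne hφhom hφpos (hle t) hx)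
    (fun t => by
      show F x _ ^ 2 = _
      rw [hFS _ (hle t)])
    hgd (by rw [hp0]; exact hg2) hom _ rfl _ _ rfl rfl
  obtain ⟨C1, C2⟩ := C
  rw [hp0] at C1 C2
  have hD0 := hD 0
  simp only [zero_smul, add_zero] at C1 C2 hD0
  have hs0 : 0 < s 0 := by simp only [hs, zero_smul, add_zero]; exact hψpos ξ hξ
  have hd := hDpos ξ hξ
  set d := 1 - fderiv ℝ φ ξ x with hdd
  have hsymm : ∀ a b, fderiv ℝ (fderiv ℝ g) (ξ - φ ξ • x) a b
      = fderiv ℝ (fderiv ℝ g) (ξ - φ ξ • x) b a := by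
    have := (contDiffAt_of_on hgs hy0).isSymmSndFDerivAt (by
      simp [minSmoothness_of_isRCLikeNormedField]; exact WithTop.coe_le_coe.2 (le_top : (2:ℕ∞) ≤ ⊤))
    intro a b; exact this a b
  have hd' : d = 1 - co1 ξ x * φ ξ - co2 ξ x * deriv p 0 := by rw [hD0, hp0]; ring
  have hpd := pd_iff (fderiv ℝ (fderiv ℝ g) (ξ - φ ξ • x)) hsymm (ξ - φ ξ • x) (e - deriv p 0 • x)
    (by
      intro θ
      have hθ := co_eq hξ θ
      rw [← he] at hθ
      set a := co1 ξ θ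
      set b := co2 ξ θ
      refine ⟨(a * (1 - deriv p 0 * co2 ξ x) + b * (deriv p 0 * co1 ξ x)) / d,
        (a * (φ ξ * co2 ξ x) + b * (1 - φ ξ * co1 ξ x)) / d, ?_⟩
      have hdθ : d • θ = (a * (1 - deriv p 0 * co2 ξ x) + b * (deriv p 0 * co1 ξ x)) • (ξ - φ ξ • x)
          + (a * (φ ξ * co2 ξ x) + b * (1 - φ ξ * co1 ξ x)) • (e - deriv p 0 • x) := by
        rw [hd', hθ]
        generalize deriv p 0 = k at *
        generalize co1 ξ x = u at *
        generalize co2 ξ x = v at *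
        rw [hx12]
        module
      have : θ = d⁻¹ • (d • θ) := by rw [smul_smul, inv_mul_cancel₀ hd.ne', one_smul]
      rw [this, hdθ, smul_add, smul_smul, smul_smul]
      congr 2 <;> ring)
    (by
      intro α β h0
      have h1 : (α * (1 - φ ξ * co1 ξ x) - β * (deriv p 0 * co1 ξ x)) • ξ +
          (- α * (φ ξ * co2 ξ x) + β * (1 - deriv p 0 * co2 ξ x)) • e = 0 := by
        rw [← h0]
        generalize deriv p 0 = k at *
        generalize co1 ξ x = u at *
        generalize co2 ξ x = v at *
        rw [hx12]
        module
      obtain ⟨i1, i2⟩ := co_indep hξ _ _ h1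
      have : β * d = 0 := by
        rw [hd']
        linear_combination (φ ξ * co2 ξ x) * i1 + (1 - φ ξ * co1 ξ x) * i2
      exact (mul_eq_zero.1 this).resolve_right hd.ne')
    (by rw [C1]; positivity)
  rw [C2] at hpd
  simp only [iteratedFDeriv_two_apply, Matrix.cons_val_zero, Matrix.cons_val_one]
  rw [hpd, mul_pos_iff_of_pos_left (by positivity)]

/-- In dimension 2, for the projectively flat metric
`F(x,y) = ψ(y + P(x,y)•x)·(1 + D_yP(x,y)(x))` of zero flag curvature built from a
Minkowski norm `ψ` and a weak Minkowski norm `φ`, every connected component of the set `𝒪`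
of points `x` at which `F(x,·)` is a Minkowski norm is convex. -/
theorem stmt_16
    (ψ φ : EuclideanSpace ℝ (Fin 2) → ℝ)
    -- `ψ` is a Minkowski norm
    (hψhom : ∀ α : ℝ, 0 < α → ∀ y, ψ (α • y) = α * ψ y)
    (hψpos : ∀ y : EuclideanSpace ℝ (Fin 2), y ≠ 0 → 0 < ψ y)
    (hψsmooth : ContDiffOn ℝ (⊤ : ℕ∞) ψ {y | y ≠ 0})
    (hψpd : ∀ y : EuclideanSpace ℝ (Fin 2), y ≠ 0 →
      ∀ θ : EuclideanSpace ℝ (Fin 2), θ ≠ 0 →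
        0 < iteratedFDeriv ℝ 2 (fun z => ψ z ^ 2) y ![θ, θ])
    -- `φ` is a weak Minkowski norm
    (hφhom : ∀ α : ℝ, 0 < α → ∀ y, φ (α • y) = α * φ y)
    (hφpos : ∀ y : EuclideanSpace ℝ (Fin 2), y ≠ 0 → 0 < φ y)
    (hφsmooth : ContDiffOn ℝ (⊤ : ℕ∞) φ {y | y ≠ 0})
    (hφsub : ∀ y₁ y₂, φ (y₁ + y₂) ≤ φ y₁ + φ y₂)
    (hφreg : ∀ y₁ y₂, φ (y₁ + y₂) = φ y₁ + φ y₂ →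
      ∃ (v : EuclideanSpace ℝ (Fin 2)) (c₁ c₂ : ℝ),
        0 ≤ c₁ ∧ 0 ≤ c₂ ∧ y₁ = c₁ • v ∧ y₂ = c₂ • v)
    -- `P` is the unique (smooth) solution of `P = φ(y + P•x)` on `Ω = {φ < 1}`
    (P : EuclideanSpace ℝ (Fin 2) → EuclideanSpace ℝ (Fin 2) → ℝ)
    (hP : ∀ x, φ x < 1 → ∀ y, P x y = φ (y + P x y • x))
    (hPuniq : ∀ x, φ x < 1 → ∀ y, ∀ t : ℝ, t = φ (y + t • x) → t = P x y)
    (hPsmooth : ContDiffOn ℝ (⊤ : ℕ∞)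
      (fun p : EuclideanSpace ℝ (Fin 2) × EuclideanSpace ℝ (Fin 2) => P p.1 p.2)
      ({x | φ x < 1} ×ˢ {y | y ≠ 0}))
    -- `F` is the associated metric
    (F : EuclideanSpace ℝ (Fin 2) → EuclideanSpace ℝ (Fin 2) → ℝ)
    (hF : ∀ x, φ x < 1 → ∀ y : EuclideanSpace ℝ (Fin 2), y ≠ 0 →
      F x y = ψ (y + P x y • x) * (1 + fderiv ℝ (fun z => P x z) y x))
    -- `O` is the set on which `F(x,·)` is a Minkowski norm
    (O : Set (EuclideanSpace ℝ (Fin 2)))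
    (hO : O = {x | φ x < 1 ∧ ∀ y : EuclideanSpace ℝ (Fin 2), y ≠ 0 →
      ∀ θ : EuclideanSpace ℝ (Fin 2), θ ≠ 0 →
        0 < iteratedFDeriv ℝ 2 (fun z => F x z ^ 2) y ![θ, θ]}) :
    ∀ x ∈ O, Convex ℝ (connectedComponentIn O x) := by
  intro x0 hx0
  set K := connectedComponentIn O x0 with hK
  have hKO : K ⊆ O := connectedComponentIn_subset O x0
  have hKc : IsPreconnected K := isPreconnected_connectedComponentIn
  rw [convex_iff_segment_subset]
  intro a ha b hb
  have hseg : segment ℝ a b ⊆ O := by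
    rintro _ ⟨α, β, hα, hβ, hαβ, rfl⟩
    have hKΩ : ∀ x ∈ K, φ x < 1 := fun x hx => by
      have := hKO hx
      rw [hO] at this
      exact this.1
    have hφ0 := phi_zero hφhom
    have hφh : ∀ c : ℝ, 0 ≤ c → ∀ y, φ (c • y) = c * φ y := by
      intro c hc y
      rcases hc.eq_or_lt with rfl | hc
      · simp [hφ0]
      · exact hφhom c hc y
    have hm : φ (α • a + β • b) < 1 := by
      have h1 := hφsub (α • a) (β • b)
      rw [hφh α hα, hφh β hβ] at h1
      have ha1 := hKΩ a ha
      have hb1 := hKΩ b hb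
      rcases hα.eq_or_lt with rfl | hα'
      · have : β = 1 := by linarith
        subst this; linarith
      · nlinarith
    rw [hO]
    refine ⟨hm, fun y hy => ?_⟩
    set m := α • a + β • b with hmdef
    set ξ := y + P m y • m with hξdef
    have hyξ : y = ξ - φ ξ • m := by rw [hξdef, ← hP m hm y]; simp
    have hξ : ξ ≠ 0 := by
      intro h0
      rw [h0, hφ0] at hyξ
      simp at hyξ
      exact hy hyξ
    obtain ⟨q, hq⟩ := key ψ φ hψhom hψpos hψsmooth hφhom hφpos hφsmooth hφsub P hP hPuniq hPsmooth
      F hF ξ hξ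
    rw [hyξ, hq m hm]
    have hDpos : ∀ x, φ x < 1 → 0 < 1 - fderiv ℝ φ ξ x := fun x hx => by
      have := dphi_le hφhom hφsmooth hφsub hξ x
      linarith
    set r : EuclideanSpace ℝ (Fin 2) → ℝ := fun x => co2 ξ x / (1 - fderiv ℝ φ ξ x) with hr
    have hqK : ∀ x ∈ K, 0 < q (r x) := by
      intro x hx
      have hxO := hKO hx
      rw [hO] at hxO
      exact (hq x hxO.1).1 (hxO.2 _ (S_ne hφhom hφpos hξ hxO.1))
    have hrc : ContinuousOn r K := by
      apply ContinuousOn.div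
      · unfold co2; fun_prop
      · fun_prop
      · intro x hx; exact (hDpos x (hKΩ x hx)).ne'
    have hoc : (r '' K).OrdConnected := (hKc.image r hrc).ordConnected
    have hda := hDpos a (hKΩ a ha)
    have hdb := hDpos b (hKΩ b hb)
    have hdm := hDpos m hm
    have edm : 1 - fderiv ℝ φ ξ m = α * (1 - fderiv ℝ φ ξ a) + β * (1 - fderiv ℝ φ ξ b) := by
      rw [hmdef]
      simp only [map_add, map_smul, smul_eq_mul]
      linear_combination (-1 : ℝ) * hαβ
    have ecm : co2 ξ m = α * co2 ξ a + β * co2 ξ b := by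
      rw [hmdef]; simp [co2]; ring
    have era : co2 ξ a = r a * (1 - fderiv ℝ φ ξ a) := by
      simp only [hr]; field_simp
    have erb : co2 ξ b = r b * (1 - fderiv ℝ φ ξ b) := by
      simp only [hr]; field_simp
    have hmem : r m ∈ r '' K := by
      have h1 := mul_nonneg hα hda.le
      have h2 := mul_nonneg hβ hdb.le
      have hrm : r m = co2 ξ m / (1 - fderiv ℝ φ ξ m) := rfl
      rcases le_total (r a) (r b) with h | h
      · refine hoc.out ⟨a, ha, rfl⟩ ⟨b, hb, rfl⟩ ⟨?_, ?_⟩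
        · rw [hrm, le_div_iff₀ hdm, edm, ecm, era, erb]
          nlinarith [mul_le_mul_of_nonneg_left h h2]
        · rw [hrm, div_le_iff₀ hdm, edm, ecm, era, erb]
          nlinarith [mul_le_mul_of_nonneg_left h h1]
      · refine hoc.out ⟨b, hb, rfl⟩ ⟨a, ha, rfl⟩ ⟨?_, ?_⟩
        · rw [hrm, le_div_iff₀ hdm, edm, ecm, era, erb]
          nlinarith [mul_le_mul_of_nonneg_left h h1]
        · rw [hrm, div_le_iff₀ hdm, edm, ecm, era, erb]
          nlinarith [mul_le_mul_of_nonneg_left h h2]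
    obtain ⟨x, hxK, hxr⟩ := hmem
    have := hqK x hxK
    rw [hxr] at this
    exact this
  have h1 : segment ℝ a b ⊆ connectedComponentIn O a :=
    (convex_segment a b).isPreconnected.subset_connectedComponentIn (left_mem_segment ℝ a b) hseg
  rw [← connectedComponentIn_eq ha] at h1
  exact h1
end

section
/- Let ψ : ℝ² → ℝ be a Minkowski norm and φ : ℝ² → ℝ a positively 1-homogeneous function such that φ + ψ is a weak Minkowski norm and either (i) φ(y) ≥ ψ(y) for all y, with equality only at y = 0, or (ii) −ψ(y) ≤ φ(y) ≤ ψ(y) for all y, with equalities only at y = 0. Set Ω := {x ∈ ℝ² : φ(x) + ψ(x) < 1}. Suppose Φ₊, Φ₋ : Ω × ℝ² → ℝ are C^∞ on Ω × (ℝ² \ {0}) and, for each (x,y) ∈ Ω × ℝ², Φ₊(x,y) is the unique t ∈ ℝ with t = (φ + ψ)(y + t•x) and Φ₋(x,y) is the unique t ∈ ℝ with t = (φ − ψ)(y + t•x). Define F := (Φ₊ − Φ₋)/2 on Ω × (ℝ² \ {0}) and 𝒪 := {x ∈ Ω : for every y ≠ 0 the second Fréchet derivative of z ↦ F(x,z)²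 at z = y is positive definite}. Then every connected component of 𝒪 is a convex subset of ℝ². -/
open Topology Filter

lemma cd_ev {p : ℝ → ℝ} {a : ℝ} (hp : ContDiffAt ℝ 2 p a) : ∀ᶠ s in 𝓝 a, DifferentiableAt ℝ p s := by
  filter_upwards [hp.eventually (by simp)] with s hs using hs.differentiableAt (by simp)

lemma cd_d {p : ℝ → ℝ} {a : ℝ} (hp : ContDiffAt ℝ 2 p a) : DifferentiableAt ℝ (deriv p) a := by
  have h := (hp.fderiv_right (m := 1) (by norm_num)).differentiableAt (by simp)
  have : deriv p = fun s => fderiv ℝ p s 1 := by ext s; simp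
  rw [this]
  exact h.clm_apply (differentiableAt_const _)

lemma oneD (p q l : ℝ → ℝ) (hp : ContDiffAt ℝ 2 p 0) (hl : ContDiffAt ℝ 2 l 0) (h0 : l 0 ≠ 0)
    (hq : q =ᶠ[𝓝 0] fun s => l s * p (s / l s)) :
    deriv q 0 = deriv l 0 * p 0 + deriv p 0 ∧
    deriv (deriv q) 0 = deriv (deriv l) 0 * p 0 + deriv (deriv p) 0 / l 0 := by
  have hσc : ContinuousAt (fun s => s / l s) 0 := continuousAt_id.div hl.continuousAt h0
  have e1 := cd_ev hl
  have e2 := hl.continuousAt.eventually_ne h0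
  have e3 : ∀ᶠ s in 𝓝 (0:ℝ), DifferentiableAt ℝ p (s / l s) := by
    have : Tendsto (fun s => s / l s) (𝓝 0) (𝓝 0) := by simpa [ContinuousAt] using hσc
    exact this.eventually (cd_ev hp)
  have hd : deriv q =ᶠ[𝓝 0] fun s => deriv l s * p (s / l s)
      + deriv p (s / l s) * (1 - s / l s * deriv l s) := by
    refine hq.deriv.trans ?_
    filter_upwards [e1, e2, e3] with s h1 h2 h3
    have hs : HasDerivAt (fun s => s / l s) ((1 * l s - s * deriv l s) / l s ^ 2) s :=
      (hasDerivAt_id s).div h1.hasDerivAt h2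
    have := h1.hasDerivAt.mul (h3.hasDerivAt.comp s hs)
    have h4 := this.deriv
    have h5 : (l * p ∘ fun s => s / l s) = fun s => l s * p (s / l s) := rfl
    rw [h5] at h4
    rw [h4]
    simp only [Function.comp]
    field_simp
  constructor
  · rw [hd.self_of_nhds]; simp
  · rw [hd.deriv_eq]
    have hs : HasDerivAt (fun s => s / l s) ((1 * l 0 - 0 * deriv l 0) / l 0 ^ 2) 0 :=
      (hasDerivAt_id (0:ℝ)).div e1.self_of_nhds.hasDerivAt h0
    have hp1 : HasDerivAt p (deriv p 0) ((fun s => s / l s) 0) := by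
      simpa using (cd_ev hp).self_of_nhds.hasDerivAt
    have hp2 : HasDerivAt (deriv p) (deriv (deriv p) 0) ((fun s => s / l s) 0) := by
      simpa using (cd_d hp).hasDerivAt
    have hl2 := (cd_d hl).hasDerivAt
    have := (hl2.mul (hp1.comp 0 hs)).add
      ((hp2.comp 0 hs).mul ((hs.mul hl2).const_sub 1))
    refine this.deriv.trans ?_
    simp
    field_simp
    ring

lemma sqD (g : ℝ → ℝ) (hg : ContDiffAt ℝ 2 g 0) :
    deriv (deriv (fun s => g s ^ 2)) 0 = 2 * deriv g 0 ^ 2 + 2 * g 0 * deriv (deriv g) 0 := by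
  have hd : deriv (fun s => g s ^ 2) =ᶠ[𝓝 0] fun s => 2 * g s * deriv g s := by
    filter_upwards [cd_ev hg] with s hs
    simpa using (hs.hasDerivAt.fun_pow 2).deriv
  rw [hd.deriv_eq]
  have := (((cd_ev hg).self_of_nhds.hasDerivAt.const_mul 2).mul (cd_d hg).hasDerivAt).deriv
  refine this.trans ?_
  ring

lemma lineD {E : Type*} [NormedAddCommGroup E] [NormedSpace ℝ E] (f : E → ℝ) (y θ : E)
    (hf : ContDiffAt ℝ 2 f y) :
    iteratedFDeriv ℝ 2 f y ![θ, θ] = deriv (deriv (fun s : ℝ => f (y + s • θ))) 0 := by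
  rw [iteratedFDeriv_two_apply]
  have hline : ∀ s : ℝ, HasDerivAt (fun s : ℝ => y + s • θ) θ s := fun s => by
    simpa using ((hasDerivAt_id s).smul_const θ).const_add y
  have ht : Tendsto (fun s : ℝ => y + s • θ) (𝓝 0) (𝓝 y) := by
    simpa [ContinuousAt] using (hline 0).continuousAt
  have hd : deriv (fun s : ℝ => f (y + s • θ)) =ᶠ[𝓝 0] fun s => fderiv ℝ f (y + s • θ) θ := by
    filter_upwards [ht.eventually (hf.eventually (by simp))] with s hs
    exact ((hs.differentiableAt (by simp)).hasFDerivAt.comp_hasDerivAt s (hline s)).deriv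
  rw [hd.deriv_eq]
  have h := (hf.fderiv_right (m := 1) (by norm_num)).differentiableAt (by simp)
  have h1 : HasFDerivAt (fderiv ℝ f) (fderiv ℝ (fderiv ℝ f) y) (y + (0:ℝ) • θ) := by
    simpa using h.hasFDerivAt
  have h2 := h1.comp_hasDerivAt 0 (hline 0)
  have h3 := (h2.clm_apply (hasDerivAt_const (0:ℝ) θ)).deriv
  simp at h3
  simpa using h3.symm

lemma f_zero {V : Type*} [NormedAddCommGroup V] [NormedSpace ℝ V] (f : V → ℝ)
    (hf : ∀ α : ℝ, 0 < α → ∀ y, f (α • y) = α * f y) : f 0 = 0 := by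
  have := hf 2 (by norm_num) 0
  simp at this
  linarith

lemma Phi_hom {V : Type*} [NormedAddCommGroup V] [NormedSpace ℝ V] (f : V → ℝ)
    (hf : ∀ α : ℝ, 0 < α → ∀ y, f (α • y) = α * f y) (Ω : Set V) (Φ : V → V → ℝ)
    (h1 : ∀ x ∈ Ω, ∀ y, Φ x y = f (y + Φ x y • x))
    (h2 : ∀ x ∈ Ω, ∀ y, ∀ t : ℝ, t = f (y + t • x) → t = Φ x y)
    (x : V) (hx : x ∈ Ω) (α : ℝ) (hα : 0 < α) (y : V) : Φ x (α • y) = α * Φ x y := by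
  symm
  apply h2 x hx
  rw [mul_smul, ← smul_add, hf α hα, ← h1 x hx]

lemma Phi_smooth {V : Type*} [NormedAddCommGroup V] [NormedSpace ℝ V] (Ω : Set V) (Φ : V → V → ℝ)
    (h3 : ContDiffOn ℝ (⊤ : ℕ∞) (fun p : V × V => Φ p.1 p.2) (Ω ×ˢ {y | y ≠ 0}))
    (x : V) (hx : x ∈ Ω) (y : V) (hy : y ≠ 0) : ContDiffAt ℝ 2 (fun z => Φ x z) y := by
  have : ContDiffOn ℝ (⊤ : ℕ∞) (fun z => Φ x z) {y | y ≠ 0} :=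
    h3.comp (f := fun z => (x, z)) (contDiff_prodMk_right x).contDiffOn
      (fun z hz => ⟨hx, hz⟩)
  exact (this.contDiffAt (isOpen_ne.mem_nhds hy)).of_le (WithTop.coe_le_coe.2 (le_top : (2 : ℕ∞) ≤ ⊤))

lemma line_smooth {V : Type*} [NormedAddCommGroup V] [NormedSpace ℝ V] (P : V → ℝ) (y θ : V)
    (h : ContDiffAt ℝ 2 P y) : ContDiffAt ℝ 2 (fun s : ℝ => P (y + s • θ)) 0 := by
  have hl : ContDiffAt ℝ 2 (fun s : ℝ => y + s • θ) 0 := by fun_prop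
  exact ContDiffAt.comp (0:ℝ) (g := P) (by simpa using h) hl

/-- base point change along the direction `y` -/
lemma Phi_shift {V : Type*} [NormedAddCommGroup V] [NormedSpace ℝ V] (f : V → ℝ)
    (hf : ∀ α : ℝ, 0 < α → ∀ y, f (α • y) = α * f y) (Ω : Set V) (hΩ : Convex ℝ Ω)
    (Φ : V → V → ℝ)
    (h1 : ∀ x ∈ Ω, ∀ y, Φ x y = f (y + Φ x y • x))
    (h2 : ∀ x ∈ Ω, ∀ y, ∀ t : ℝ, t = f (y + t • x) → t = Φ x y)
    (h3 : ContDiffOn ℝ (⊤ : ℕ∞) (fun p : V × V => Φ p.1 p.2) (Ω ×ˢ {y | y ≠ 0}))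
    (x y : V) (t : ℝ) (hx : x ∈ Ω) (hx' : x + t • y ∈ Ω) (hy : y ≠ 0) :
    0 < 1 + t * Φ (x + t • y) y ∧
    Φ (x + t • y) y = (1 + t * Φ (x + t • y) y) * Φ x y ∧
    ∀ θ, deriv (deriv (fun s : ℝ => Φ (x + t • y) (y + s • θ))) 0
      = deriv (deriv (fun s : ℝ => Φ x (y + s • θ))) 0 := by
  have hom := Phi_hom f hf Ω Φ h1 h2 x hx
  have rel : ∀ r : ℝ, x + r • y ∈ Ω → ∀ z, Φ (x + r • y) z
      = Φ x (z + (r * Φ (x + r • y) z) • y) := by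
    intro r hr z
    apply h2 x hx
    conv_lhs => rw [h1 _ hr z]
    congr 1
    rw [smul_add, smul_smul, mul_comm r]
    abel
  have P0 : Φ x 0 = 0 := by
    symm
    apply h2 x hx
    simp [f_zero f hf]
  have hne : ∀ r : ℝ, x + r • y ∈ Ω → 1 + r * Φ (x + r • y) y ≠ 0 := by
    intro r hr h
    have := rel r hr y
    have e : y + (r * Φ (x + r • y) y) • y = (1 + r * Φ (x + r • y) y) • y := by
      rw [add_smul, one_smul]
    rw [e, h, zero_smul, P0] at this
    rw [this] at h
    simp at h
  have hmem : ∀ r ∈ Set.Icc (0:ℝ) 1, x + (r * t) • y ∈ Ω := by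
    intro r hr
    have := hΩ.add_smul_mem hx hx' hr
    rwa [smul_smul] at this
  have hpos : 0 < 1 + t * Φ (x + t • y) y := by
    by_contra hneg
    push Not at hneg
    have hc : ContinuousOn (fun r : ℝ => 1 + (r * t) * Φ (x + (r * t) • y) y) (Set.Icc 0 1) := by
      have : ContinuousOn (fun r : ℝ => Φ (x + (r * t) • y) y) (Set.Icc 0 1) :=
        h3.continuousOn.comp (f := fun r : ℝ => (x + (r * t) • y, y))
          (by fun_prop) (fun r hr => ⟨hmem r hr, hy⟩)
      exact continuousOn_const.add ((by fun_prop : Continuous fun r : ℝ => r * t).continuousOn.mul this)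
    have := intermediate_value_Icc' (zero_le_one) hc
    obtain ⟨r, hr, h⟩ := this (show (0:ℝ) ∈ _ from ⟨by simpa using hneg, by simp⟩)
    exact hne _ (hmem r hr) h
  have hQ : Φ (x + t • y) y = (1 + t * Φ (x + t • y) y) * Φ x y := by
    rw [← hom _ hpos, add_smul, one_smul]
    exact rel t hx' y
  refine ⟨hpos, hQ, fun θ => ?_⟩
  have sp := line_smooth _ y θ (Phi_smooth Ω Φ h3 x hx y hy)
  have sq := line_smooth _ y θ (Phi_smooth Ω Φ h3 _ hx' y hy)
  have sl : ContDiffAt ℝ 2 (fun s : ℝ => 1 + t * Φ (x + t • y) (y + s • θ)) 0 :=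
    contDiffAt_const.add (contDiffAt_const.mul sq)
  have hl0 : 0 < (fun s : ℝ => 1 + t * Φ (x + t • y) (y + s • θ)) 0 := by simpa using hpos
  have hev : (fun s : ℝ => Φ (x + t • y) (y + s • θ)) =ᶠ[𝓝 0]
      fun s => (1 + t * Φ (x + t • y) (y + s • θ)) *
        Φ x (y + (s / (1 + t * Φ (x + t • y) (y + s • θ))) • θ) := by
    filter_upwards [sl.continuousAt.eventually (lt_mem_nhds hl0)] with s hs
    rw [← hom _ hs, smul_add, smul_smul, mul_div_cancel₀ _ hs.ne']
    conv_lhs => rw [rel t hx']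
    congr 1
    rw [add_smul, one_smul]
    abel
  have := (oneD _ _ _ sp sl hl0.ne' hev).2
  have d1 : deriv (fun s : ℝ => 1 + t * Φ (x + t • y) (y + s • θ)) =
     fun s => t * deriv (fun s : ℝ => Φ (x + t • y) (y + s • θ)) s := by
    ext s
    rw [deriv_const_add, deriv_const_mul_field]
  rw [d1, deriv_const_mul_field] at this
  simp only [zero_smul, add_zero] at this
  set D := deriv (deriv (fun s : ℝ => Φ (x + t • y) (y + s • θ))) 0
  set D' := deriv (deriv (fun s : ℝ => Φ x (y + s • θ))) 0
  set q := Φ (x + t • y) y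
  set p := Φ x y
  have h5 : (1 + t * q) * (1 - t * p) = 1 := by linear_combination t * hQ
  have h6 : D * (1 + t * q) = t * D * p * (1 + t * q) + D' := by
    have h7 : D' / (1 + t * q) * (1 + t * q) = D' := div_mul_cancel₀ _ hpos.ne'
    linear_combination (1 + t * q) * this + h7
  linear_combination h6 - D * h5

lemma transfer {V : Type*} [NormedAddCommGroup V] [NormedSpace ℝ V] (G G' : V → ℝ) (y : V)
    (hy : y ≠ 0)
    (hom : ∀ α : ℝ, 0 < α → ∀ y, G (α • y) = α * G y)
    (hom' : ∀ α : ℝ, 0 < α → ∀ y, G' (α • y) = α * G' y)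
    (hs : ContDiffAt ℝ 2 G y) (hs' : ContDiffAt ℝ 2 G' y) (c : ℝ) (hc : 0 < c)
    (hGG : G' y = c * G y)
    (hD : ∀ θ, deriv (deriv (fun s : ℝ => G' (y + s • θ))) 0
      = deriv (deriv (fun s : ℝ => G (y + s • θ))) 0)
    (H : ∀ θ, θ ≠ 0 → 0 < iteratedFDeriv ℝ 2 (fun z => G z ^ 2) y ![θ, θ]) :
    ∀ θ, θ ≠ 0 → 0 < iteratedFDeriv ℝ 2 (fun z => G' z ^ 2) y ![θ, θ] := by
  have key : ∀ (G : V → ℝ), (∀ α : ℝ, 0 < α → ∀ y, G (α • y) = α * G y) → ContDiffAt ℝ 2 G y →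
      ∀ θ (a : ℝ), deriv (fun s : ℝ => G (y + s • (θ + a • y))) 0
        = a * G y + deriv (fun s : ℝ => G (y + s • θ)) 0 ∧
      deriv (deriv (fun s : ℝ => G (y + s • (θ + a • y)))) 0
        = deriv (deriv (fun s : ℝ => G (y + s • θ))) 0 := by
    intro G hom hs θ a
    have sl : ContDiffAt ℝ 2 (fun s : ℝ => 1 + a * s) 0 := by fun_prop
    have hl0 : 0 < (fun s : ℝ => 1 + a * s) 0 := by simp
    have hev : (fun s : ℝ => G (y + s • (θ + a • y))) =ᶠ[𝓝 0]
      fun s => (1 + a * s) * (fun s : ℝ => G (y + s • θ)) (s / (1 + a * s)) := by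
      filter_upwards [sl.continuousAt.eventually (lt_mem_nhds hl0)] with s hs
      rw [← hom _ hs]
      congr 1
      rw [smul_add (1 + a * s), smul_smul (1 + a * s), mul_div_cancel₀ _ hs.ne', add_smul, one_smul,
        smul_add, smul_smul, mul_comm s a]
      abel
    have := oneD _ _ _ (line_smooth _ y θ hs) sl hl0.ne' hev
    have d1 : deriv (fun s : ℝ => 1 + a * s) = fun _ => a := by
      ext s
      rw [deriv_const_add, deriv_const_mul_field]
      simp
    rw [d1] at this
    simpa using this
  have form : ∀ (G : V → ℝ), ContDiffAt ℝ 2 G y → ∀ θ,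
      iteratedFDeriv ℝ 2 (fun z => G z ^ 2) y ![θ, θ] =
      2 * deriv (fun s : ℝ => G (y + s • θ)) 0 ^ 2
        + 2 * G y * deriv (deriv (fun s : ℝ => G (y + s • θ))) 0 := by
    intro G hs θ
    rw [lineD _ y θ (hs.pow 2), sqD _ (line_smooth _ y θ hs)]
    simp
  have ray : ∀ (G : V → ℝ), (∀ α : ℝ, 0 < α → ∀ y, G (α • y) = α * G y) → ContDiffAt ℝ 2 G y →
      ∀ a : ℝ, iteratedFDeriv ℝ 2 (fun z => G z ^ 2) y ![a • y, a • y] = 2 * (a * G y) ^ 2 := by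
    intro G hom hs a
    rw [form G hs]
    have := key G hom hs 0 a
    simp only [zero_add, smul_zero, deriv_const'] at this
    rw [this.1, this.2]
    simp
  have hG : G y ≠ 0 := by
    intro h
    have := H y hy
    have r := ray G hom hs 1
    rw [one_smul, h] at r
    rw [r] at this
    simp at this
  have hG' : G' y ≠ 0 := by rw [hGG]; exact mul_ne_zero hc.ne' hG
  intro θ hθ
  by_cases hpar : ∃ a : ℝ, θ = a • y
  · obtain ⟨a, rfl⟩ := hpar
    rw [ray G' hom' hs']
    have ha : a ≠ 0 := by rintro rfl; simp at hθ
    positivity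
  · set a := - deriv (fun s : ℝ => G (y + s • θ)) 0 / G y with ha
    have hne : θ + a • y ≠ 0 := by
      intro h
      apply hpar
      refine ⟨-a, ?_⟩
      rw [neg_smul]
      exact eq_neg_of_add_eq_zero_left h
    have h := H _ hne
    rw [form G hs, (key G hom hs θ a).1, (key G hom hs θ a).2] at h
    have e : a * G y + deriv (fun s : ℝ => G (y + s • θ)) 0 = 0 := by
      rw [ha]; field_simp; ring
    rw [e] at h
    rw [form G' hs', hD, hGG]
    have : 0 < c * (2 * 0 ^ 2 + 2 * G y * deriv (deriv (fun s : ℝ => G (y + s • θ))) 0) :=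
      mul_pos hc h
    nlinarith [sq_nonneg (deriv (fun s : ℝ => G' (y + s • θ)) 0)]


/-- In dimension 2, for the metric `F = (Φ₊ − Φ₋)/2` of constant flag
curvature `−1` built from a Minkowski norm `ψ` and a positively 1-homogeneous `φ` with
`φ + ψ` a weak Minkowski norm and either `ψ < φ` or `−ψ < φ < ψ` away from `0`, every
connected component of the set `𝒪` of points `x` at which `F(x,·)` is a Minkowski norm
is convex. -/
theorem stmt_17
    (ψ φ : EuclideanSpace ℝ (Fin 2) → ℝ)
    -- `ψ` is a Minkowski norm
    (hψhom : ∀ α : ℝ, 0 < α → ∀ y, ψ (α • y) = α * ψ y)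
    (hψpos : ∀ y : EuclideanSpace ℝ (Fin 2), y ≠ 0 → 0 < ψ y)
    (hψsmooth : ContDiffOn ℝ (⊤ : ℕ∞) ψ {y | y ≠ 0})
    (hψpd : ∀ y : EuclideanSpace ℝ (Fin 2), y ≠ 0 →
      ∀ θ : EuclideanSpace ℝ (Fin 2), θ ≠ 0 →
        0 < iteratedFDeriv ℝ 2 (fun z => ψ z ^ 2) y ![θ, θ])
    -- `φ` is positively 1-homogeneous
    (hφhom : ∀ α : ℝ, 0 < α → ∀ y, φ (α • y) = α * φ y)
    -- `φ + ψ` is a weak Minkowski norm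
    (hsumpos : ∀ y : EuclideanSpace ℝ (Fin 2), y ≠ 0 → 0 < φ y + ψ y)
    (hsumsmooth : ContDiffOn ℝ (⊤ : ℕ∞) (fun y => φ y + ψ y) {y | y ≠ 0})
    (hsumsub : ∀ y₁ y₂, φ (y₁ + y₂) + ψ (y₁ + y₂) ≤ (φ y₁ + ψ y₁) + (φ y₂ + ψ y₂))
    (hsumreg : ∀ y₁ y₂, φ (y₁ + y₂) + ψ (y₁ + y₂) = (φ y₁ + ψ y₁) + (φ y₂ + ψ y₂) →
      ∃ (v : EuclideanSpace ℝ (Fin 2)) (c₁ c₂ : ℝ),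
        0 ≤ c₁ ∧ 0 ≤ c₂ ∧ y₁ = c₁ • v ∧ y₂ = c₂ • v)
    -- case (i) or case (ii)
    (hcase : (∀ y : EuclideanSpace ℝ (Fin 2), y ≠ 0 → ψ y < φ y) ∨
      (∀ y : EuclideanSpace ℝ (Fin 2), y ≠ 0 → -ψ y < φ y ∧ φ y < ψ y))
    -- `Φ₊`, `Φ₋` are the unique (smooth) solutions on `Ω = {φ + ψ < 1}`
    (Φp Φm : EuclideanSpace ℝ (Fin 2) → EuclideanSpace ℝ (Fin 2) → ℝ)
    (hΦp : ∀ x, φ x + ψ x < 1 → ∀ y,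
      Φp x y = φ (y + Φp x y • x) + ψ (y + Φp x y • x))
    (hΦpuniq : ∀ x, φ x + ψ x < 1 → ∀ y, ∀ t : ℝ,
      t = φ (y + t • x) + ψ (y + t • x) → t = Φp x y)
    (hΦm : ∀ x, φ x + ψ x < 1 → ∀ y,
      Φm x y = φ (y + Φm x y • x) - ψ (y + Φm x y • x))
    (hΦmuniq : ∀ x, φ x + ψ x < 1 → ∀ y, ∀ t : ℝ,
      t = φ (y + t • x) - ψ (y + t • x) → t = Φm x y)
    (hΦpsmooth : ContDiffOn ℝ (⊤ : ℕ∞)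
      (fun p : EuclideanSpace ℝ (Fin 2) × EuclideanSpace ℝ (Fin 2) => Φp p.1 p.2)
      ({x | φ x + ψ x < 1} ×ˢ {y | y ≠ 0}))
    (hΦmsmooth : ContDiffOn ℝ (⊤ : ℕ∞)
      (fun p : EuclideanSpace ℝ (Fin 2) × EuclideanSpace ℝ (Fin 2) => Φm p.1 p.2)
      ({x | φ x + ψ x < 1} ×ˢ {y | y ≠ 0}))
    -- `O` is the set on which `F(x,·) = ((Φ₊ − Φ₋)/2)(x,·)` is a Minkowski norm
    (O : Set (EuclideanSpace ℝ (Fin 2)))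
    (hO : O = {x | φ x + ψ x < 1 ∧ ∀ y : EuclideanSpace ℝ (Fin 2), y ≠ 0 →
      ∀ θ : EuclideanSpace ℝ (Fin 2), θ ≠ 0 →
        0 < iteratedFDeriv ℝ 2 (fun z => ((Φp x z - Φm x z) / 2) ^ 2) y ![θ, θ]}) :
    ∀ x ∈ O, Convex ℝ (connectedComponentIn O x) := by
  have fhom : ∀ α : ℝ, 0 < α → ∀ y, (fun z => φ z + ψ z) (α • y) = α * (fun z => φ z + ψ z) y := by
    intro α hα y
    simp only [hφhom α hα, hψhom α hα]; ring
  have ghom : ∀ α : ℝ, 0 < α → ∀ y, (fun z => φ z - ψ z) (α • y) = α * (fun z => φ z - ψ z) y := by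
    intro α hα y
    simp only [hφhom α hα, hψhom α hα]; ring
  have f0 := f_zero (fun z => φ z + ψ z) fhom
  have hΩ : Convex ℝ {x | φ x + ψ x < 1} := by
    rw [convex_iff_forall_pos]
    intro u hu v hv a b ha hb hab
    have h1 := hsumsub (a • u) (b • v)
    have h2 := fhom a ha u
    have h3 := fhom b hb v
    simp only [Set.mem_ofPred_eq] at *
    nlinarith
  have main : ∀ (x y : EuclideanSpace ℝ (Fin 2)) (t : ℝ), φ x + ψ x < 1 → φ (x + t • y) + ψ (x + t • y) < 1 → y ≠ 0 →
      (∀ θ, θ ≠ 0 → 0 < iteratedFDeriv ℝ 2 (fun z => ((Φp x z - Φm x z) / 2) ^ 2) y ![θ, θ]) →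
      (∀ θ, θ ≠ 0 → 0 < iteratedFDeriv ℝ 2
        (fun z => ((Φp (x + t • y) z - Φm (x + t • y) z) / 2) ^ 2) y ![θ, θ]) := by
    intro x y t hx hx' hy H
    have hp := Phi_shift (fun z => φ z + ψ z) fhom _ hΩ Φp hΦp hΦpuniq hΦpsmooth x y t hx hx' hy
    have hm := Phi_shift (fun z => φ z - ψ z) ghom _ hΩ Φm hΦm hΦmuniq hΦmsmooth x y t hx hx' hy
    have homp := Phi_hom (fun z => φ z + ψ z) fhom {x | φ x + ψ x < 1} Φp hΦp hΦpuniq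
    have homm := Phi_hom (fun z => φ z - ψ z) ghom {x | φ x + ψ x < 1} Φm hΦm hΦmuniq
    have sp := Phi_smooth {x | φ x + ψ x < 1} Φp hΦpsmooth
    have sm := Phi_smooth {x | φ x + ψ x < 1} Φm hΦmsmooth
    obtain ⟨p1, p2, p3⟩ := hp
    obtain ⟨m1, m2, m3⟩ := hm
    have ss : ∀ w, φ w + ψ w < 1 → ContDiffAt ℝ 2 (fun z => (Φp w z - Φm w z) / 2) y := by
      intro w hw
      exact ((sp w hw y hy).sub (sm w hw y hy)).div_const 2
    have dd : ∀ w, φ w + ψ w < 1 → ∀ θ,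
        deriv (deriv (fun s : ℝ => (Φp w (y + s • θ) - Φm w (y + s • θ)) / 2)) 0
        = (deriv (deriv (fun s : ℝ => Φp w (y + s • θ))) 0
          - deriv (deriv (fun s : ℝ => Φm w (y + s • θ))) 0) / 2 := by
      intro w hw θ
      have a1 := line_smooth _ y θ (sp w hw y hy)
      have a2 := line_smooth _ y θ (sm w hw y hy)
      have e : deriv (fun s : ℝ => (Φp w (y + s • θ) - Φm w (y + s • θ)) / 2) =ᶠ[𝓝 0]
          fun s => (deriv (fun s : ℝ => Φp w (y + s • θ)) s
            - deriv (fun s : ℝ => Φm w (y + s • θ)) s) / 2 := by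
        filter_upwards [cd_ev a1, cd_ev a2] with s b1 b2
        exact ((b1.hasDerivAt.sub b2.hasDerivAt).div_const 2).deriv
      rw [e.deriv_eq]
      exact (((cd_d a1).hasDerivAt.sub (cd_d a2).hasDerivAt).div_const 2).deriv
    refine transfer (fun z => (Φp x z - Φm x z) / 2)
      (fun z => (Φp (x + t • y) z - Φm (x + t • y) z) / 2) y hy ?_ ?_ (ss _ hx) (ss _ hx')
      ((1 + t * Φp (x + t • y) y) * (1 + t * Φm (x + t • y) y)) (mul_pos p1 m1) ?_ ?_ H
    · intro α hα z
      simp only [homp x hx α hα, homm x hx α hα]; ring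
    · intro α hα z
      simp only [homp _ hx' α hα, homm _ hx' α hα]; ring
    · skip
      linear_combination (1 / 2) * (1 + t * Φm (x + t • y) y) * p2
        - (1 / 2) * (1 + t * Φp (x + t • y) y) * m2
    · intro θ
      rw [dd _ hx', dd _ hx, p3, m3]
  intro x hx u hu v hv a b ha hb hab
  have hC : IsPreconnected (connectedComponentIn O x) := isPreconnected_connectedComponentIn
  have hCO : connectedComponentIn O x ⊆ O := connectedComponentIn_subset O x
  have hOΩ : O ⊆ {x | φ x + ψ x < 1} := by
    rw [hO]; exact fun z hz => hz.1
  have hseg : segment ℝ u v ⊆ O := by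
    intro p hp
    have hpΩ : φ p + ψ p < 1 := hΩ.segment_subset (hOΩ (hCO hu)) (hOΩ (hCO hv)) hp
    rw [hO]
    refine ⟨hpΩ, fun y hy => ?_⟩
    let l : EuclideanSpace ℝ (Fin 2) → ℝ := fun z => z 0 * y 1 - z 1 * y 0
    have hlc : Continuous l := by fun_prop
    have himg := (hC.image l hlc.continuousOn).ordConnected
    have hlp : l p ∈ Set.uIcc (l u) (l v) := by
      obtain ⟨a, b, ha, hb, hab, rfl⟩ := hp
      rw [← segment_eq_uIcc]
      refine ⟨a, b, ha, hb, hab, ?_⟩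
      simp [l]; ring
    obtain ⟨c, hcC, hcl⟩ := himg.uIcc_subset ⟨u, hu, rfl⟩ ⟨v, hv, rfl⟩ hlp
    have hcO := hCO hcC
    have : ∃ t : ℝ, p = c + t • y := by
      have hcl' : c 0 * y 1 - c 1 * y 0 = p 0 * y 1 - p 1 * y 0 := hcl
      by_cases h0 : y 0 = 0
      · have h1 : y 1 ≠ 0 := by
          intro h1
          apply hy
          ext i; fin_cases i <;> simp [h0, h1]
        refine ⟨(p 1 - c 1) / y 1, ?_⟩
        ext i; fin_cases i
        · simp only [h0, mul_zero, sub_zero] at hcl'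
          have := mul_right_cancel₀ h1 hcl'
          simp [h0, this]
        · simp; field_simp; ring
      · refine ⟨(p 0 - c 0) / y 0, ?_⟩
        ext i; fin_cases i
        · simp; field_simp; ring
        · simp; field_simp; linear_combination hcl'
    obtain ⟨t, rfl⟩ := this
    rw [hO] at hcO
    exact main c y t hcO.1 hpΩ hy (hcO.2 y hy)
  have hsub : segment ℝ u v ⊆ connectedComponentIn O u :=
    (convex_segment u v).isPreconnected.subset_connectedComponentIn (left_mem_segment ℝ u v) hseg
  rw [connectedComponentIn_eq hu]
  exact hsub ⟨a, b, ha, hb, hab, rfl⟩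
end

section
/- Fix a₁ ∈ [0,1) and set a := (a₁, 0) ∈ ℝ², φ(y) := ‖y‖ + ⟨a,y⟩, and Ω := {x ∈ ℝ² : φ(x) < 1}. Let P : Ω × ℝ² → ℝ be the unique function with P(x,y) = φ(y + P(x,y)•x) for all (x,y) ∈ Ω × ℝ² (the Funk metric of Ω), which is C^∞ on Ω × (ℝ² \ {0}), and define F(x,y) := P(x,y)·(1 + (D_yP)(x,y)(x)) for y ≠ 0, where (D_yP)(x,y) is the Fréchet derivative of z ↦ P(x,z) at z = y. Let 𝒪 := {x ∈ Ω : for every y ≠ 0 the second Fréchet derivative of z ↦ F(x,z)² at z = y is positive definite}. Writing x = (x₁, x₂), the set 𝒪 is given exactly as follows: (1) if 0 ≤ a₁ < 2√2/3 then 𝒪 = Ω; (2) if a₁ = 2√2/3 then 𝒪 = Ω \ {x : x₁ = −3√2/2}; (3) if 2√2/3 < a₁ < 1 then 𝒪 = Ω ∩ {x : 8·(1 − a₁²)·(x₁ + a₁/(4·(1 − a₁²)))² − (9·a₁² − 8)·x₂² > (9·a₁² − 8)/(2·(1 − a₁²))}. -/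
open scoped RealInnerProductSpace

lemma alg1 (r P S α β l m : ℝ) :
    let c := 1 - α*(P-1) - β*S
    let K := r*(c-α)
    let K1 := r*(l*c - l*α - m*β)
    let p := r*P
    let p1 := r*(l*P+m*S)
    let r1 := l*r
    let p2K := m^2*r^2
    let N := p*r
    let N1 := p1*r+p*r1
    ((p2K*r+2*p1*r1*K+p*p2K*c)*K - N*p2K*(c*c-(α^2+β^2))-2*(N1*K-N*K1)*K1)*r^3
      = (K^2*r+3*(r*S)*(r*β)*K+3*p*(r*β)^2)*(r^2*m)^2 := by
  intros; ring

/-- second-order algebra -/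
lemma alg2 (a x1 x2 w1 w2 v1 v2 r p p1 p2 r1 K K1 : ℝ) (hr : 0 < r) (hr2 : r^2 = w1^2+w2^2)
    (hp : p = r + a*w1) (hr1 : r*r1 = w1*v1+w2*v2) (hp1 : p1 = r1 + a*v1)
    (hK : K = r*(1-a*x1) - (w1*x1+w2*x2)) (hK1 : K1 = r1*(1-a*x1) - (v1*x1+v2*x2))
    (hp2 : p2*K*r^2 = (w1*v2-w2*v1)^2) :
    ((p2*r+2*p1*r1+p*(p2*(1-a*x1)))*K*K - (p*r)*(p2*K*((1-a*x1)^2-(x1^2+x2^2)))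
      - 2*((p1*r+p*r1)*K-(p*r)*K1)*K1)*r^3
      = (K^2*r-3*a*w2*(w1*x2-w2*x1)*K+3*p*(w1*x2-w2*x1)^2)*(w1*v2-w2*v1)^2 := by
  have hr0 : r ≠ 0 := hr.ne'
  obtain ⟨l, hl⟩ : ∃ l, l = (w1*v1+w2*v2)/r^2 := ⟨_, rfl⟩
  obtain ⟨m, hm⟩ : ∃ l, l = (w1*v2-w2*v1)/r^2 := ⟨_, rfl⟩
  obtain ⟨α, hα⟩ : ∃ l, l = (w1*x1+w2*x2)/r := ⟨_, rfl⟩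
  obtain ⟨β, hβ⟩ : ∃ l, l = (w1*x2-w2*x1)/r := ⟨_, rfl⟩
  obtain ⟨P, hP⟩ : ∃ l, l = p/r := ⟨_, rfl⟩
  obtain ⟨S, hS⟩ : ∃ l, l = -a*w2/r := ⟨_, rfl⟩
  have hl' : w1*v1+w2*v2 = r^2*l := by rw [hl]; field_simp
  have hm' : w1*v2-w2*v1 = r^2*m := by rw [hm]; field_simp
  have hα' : w1*x1+w2*x2 = r*α := by rw [hα]; field_simp
  have hβ' : w1*x2-w2*x1 = r*β := by rw [hβ]; field_simp
  have hP' : p = r*P := by rw [hP]; field_simp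
  have hS' : a*w2 = -r*S := by rw [hS]; field_simp
  have haw : a*w1 = r*(P-1) := by linarith
  have e1 : r1 = l*r := by
    apply mul_left_cancel₀ hr0; rw [hr1, hl']; ring
  have e2 : p2*K = m^2*r^2 := by
    have : r^2*(p2*K) = r^2*(m^2*r^2) := by rw [hm'] at hp2; linarith
    exact mul_left_cancel₀ (pow_ne_zero 2 hr0) this
  have e3 : a*x1 = α*(P-1)+β*S := by
    have : r^2*(a*x1) = r^2*(α*(P-1)+β*S) := by
      linear_combination (a*x1)*hr2 + (a*w1)*hα' + r*α*haw - (a*w2)*hβ' - r*β*hS'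
    exact mul_left_cancel₀ (pow_ne_zero 2 hr0) this
  have e4 : a*v1 = r*(l*(P-1)+m*S) := by
    have : r^2*(a*v1) = r^2*(r*(l*(P-1)+m*S)) := by
      linear_combination (a*v1)*hr2 + (a*w1)*hl' + r^2*l*haw - (a*w2)*hm' - r^2*m*hS'
    exact mul_left_cancel₀ (pow_ne_zero 2 hr0) this
  have e5 : v1*x1+v2*x2 = r*(l*α+m*β) := by
    have : r^2*(v1*x1+v2*x2) = r^2*(r*(l*α+m*β)) := by
      linear_combination (v1*x1+v2*x2)*hr2 + (w1*v1+w2*v2)*hα' + r*α*hl' + (w1*v2-w2*v1)*hβ'+r*β*hm'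
    exact mul_left_cancel₀ (pow_ne_zero 2 hr0) this
  have e6 : x1^2+x2^2 = α^2+β^2 := by
    have : r^2*(x1^2+x2^2) = r^2*(α^2+β^2) := by
      linear_combination (x1^2+x2^2)*hr2 + (w1*x1+w2*x2+r*α)*hα' + (w1*x2-w2*x1+r*β)*hβ'
    exact mul_left_cancel₀ (pow_ne_zero 2 hr0) this
  have f1 : K = r*((1 - α*(P-1) - β*S)-α) := by rw [hK, hα', e3]; ring
  have f2 : K1 = r*(l*(1 - α*(P-1) - β*S) - l*α - m*β) := by rw [hK1, e5, e3, e1]; ring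
  have f3 : p1 = r*(l*P+m*S) := by rw [hp1, e4, e1]; ring
  have f4 : 1 - a*x1 = 1 - α*(P-1) - β*S := by rw [e3]; ring
  have key := alg1 r P S α β l m
  simp only at key
  rw [← f1, ← f2, ← f3, ← hP', ← e1, ← e2, ← f4, ← e6, ← hβ', ← hm'] at key
  linear_combination key - (-3*K*(w1*x2-w2*x1)*(w1*v2-w2*v1)^2)*hS'

/-- the one-variable calculus along a line -/
lemma line (a x1 x2 y1 y2 t1 t2 : ℝ) (p : ℝ → ℝ) (hp : ContDiffAt ℝ 2 p 0)
    (r K : ℝ → ℝ)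
    (hr : ∀ s, r s = p s - a*(y1+s*t1+p s*x1))
    (hK : ∀ s, K s = r s*(1-a*x1) - ((y1+s*t1+p s*x1)*x1+(y2+s*t2+p s*x2)*x2))
    (hrel : ∀ᶠ s in nhds (0:ℝ), 0 < r s ∧
      r s^2 = (y1+s*t1+p s*x1)^2 + (y2+s*t2+p s*x2)^2 ∧ 0 < K s) :
    ∃ (p1 : ℝ) (G1 : ℝ → ℝ) (G2 : ℝ), HasDerivAt p p1 0 ∧
      K 0 * p1 = (y1+p 0*x1)*t1+(y2+p 0*x2)*t2 + r 0*a*t1 ∧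
      (∀ᶠ s in nhds (0:ℝ), HasDerivAt (fun s => p s * r s / K s) (G1 s) s) ∧
      HasDerivAt G1 G2 0 ∧
      ((y1+p 0*x1)*(t2+p1*x2) - (y2+p 0*x2)*(t1+p1*x1) = 0 → G1 0 * K 0 = p1 * r 0) ∧
      G2 * K 0^3 * r 0^3 = (K 0^2*r 0-3*a*(y2+p 0*x2)*((y1+p 0*x1)*x2-(y2+p 0*x2)*x1)*K 0
          +3*p 0*((y1+p 0*x1)*x2-(y2+p 0*x2)*x1)^2)
        *((y1+p 0*x1)*(t2+p1*x2) - (y2+p 0*x2)*(t1+p1*x1))^2 := by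
  have hev : ∀ᶠ s in nhds (0:ℝ), HasDerivAt p (deriv p s) s := by
    filter_upwards [hp.eventually (by simp)] with s hs
    exact (hs.differentiableAt (by norm_num)).hasDerivAt
  have hp2 : HasDerivAt (deriv p) (deriv (deriv p) 0) 0 := by
    have h1 : ContDiffAt ℝ 1 (fun s => fderiv ℝ p s 1) 0 :=
      (hp.fderiv_right (m := 1) (by norm_num)).clm_apply contDiffAt_const
    have h2 : (fun s => fderiv ℝ p s 1) = deriv p := by ext s; simp
    rw [h2] at h1
    exact (h1.differentiableAt (by norm_num)).hasDerivAt
  set q := deriv p with hq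
  set p2 := deriv q 0
  have hW1 : ∀ (x y t s : ℝ), HasDerivAt p (q s) s → HasDerivAt (fun s => y+s*t+p s*x) (t+q s*x) s := by
    intro x y t s h
    have := (((hasDerivAt_id s).mul_const t).const_add y).add (h.mul_const x)
    simpa using! this
  have hW2 : ∀ (x t : ℝ), HasDerivAt (fun s => t+q s*x) (p2*x) 0 := by
    intro x t
    exact (hp2.mul_const x).const_add t
  have hr' : ∀ s, HasDerivAt p (q s) s → HasDerivAt r (q s - a*(t1+q s*x1)) s := by
    intro s h
    have : r = fun s => p s - a*(y1+s*t1+p s*x1) := funext hr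
    rw [this]
    exact h.sub ((hW1 x1 y1 t1 s h).const_mul a)
  have hr2 : HasDerivAt (fun s => q s - a*(t1+q s*x1)) (p2 - a*(p2*x1)) 0 :=
    hp2.sub ((hW2 x1 t1).const_mul a)
  have hK' : ∀ s, HasDerivAt p (q s) s → HasDerivAt K ((q s - a*(t1+q s*x1))*(1-a*x1)
      - ((t1+q s*x1)*x1+(t2+q s*x2)*x2)) s := by
    intro s h
    have : K = fun s => r s*(1-a*x1) - ((y1+s*t1+p s*x1)*x1+(y2+s*t2+p s*x2)*x2) := funext hK
    rw [this]
    exact ((hr' s h).mul_const _).sub (((hW1 x1 y1 t1 s h).mul_const x1).add ((hW1 x2 y2 t2 s h).mul_const x2))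
  have hK2 : HasDerivAt (fun s => (q s - a*(t1+q s*x1))*(1-a*x1)
      - ((t1+q s*x1)*x1+(t2+q s*x2)*x2)) ((p2 - a*(p2*x1))*(1-a*x1) - (p2*x1*x1+p2*x2*x2)) 0 :=
    (hr2.mul_const _).sub (((hW2 x1 t1).mul_const x1).add ((hW2 x2 t2).mul_const x2))
  -- first-order relation, eventually
  have hrel1 : ∀ᶠ s in nhds (0:ℝ), r s * (q s - a*(t1+q s*x1)) =
      (y1+s*t1+p s*x1)*(t1+q s*x1) + (y2+s*t2+p s*x2)*(t2+q s*x2) := by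
    filter_upwards [hrel.eventually_nhds, hev] with s hs h
    have e : (fun s => r s^2) =ᶠ[nhds s] fun s => (y1+s*t1+p s*x1)^2 + (y2+s*t2+p s*x2)^2 :=
      hs.mono fun _ h => h.2.1
    have d1 := ((hr' s h).pow 2).congr_of_eventuallyEq e.symm
    have d2 := ((hW1 x1 y1 t1 s h).pow 2).add ((hW1 x2 y2 t2 s h).pow 2)
    have := d1.unique d2
    norm_num at this
    linarith
  have h0 := hev.self_of_nhds
  have hrel2 := by
    have d1 := ((hr' 0 h0).mul hr2).congr_of_eventuallyEq (Filter.EventuallyEq.symm hrel1)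
    have d2 := ((hW1 x1 y1 t1 0 h0).mul (hW2 x1 t1)).add ((hW1 x2 y2 t2 0 h0).mul (hW2 x2 t2))
    exact d1.unique d2
  obtain ⟨r0, rr, k0⟩ := hrel.self_of_nhds
  have hrel10 := hrel1.self_of_nhds
  have hr00 := hr 0
  have hK00 := hK 0
  simp only [zero_mul, add_zero] at hrel2 rr hrel10 hr00 hK00
  have hG2 := ((((hp2.mul (hr' 0 h0)).add (h0.mul hr2)).mul (hK' 0 h0)).sub
      ((h0.mul (hr' 0 h0)).mul hK2)).div ((hK' 0 h0).pow 2) (pow_ne_zero 2 k0.ne')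
  refine ⟨q 0, _, _, h0, ?_, ?_, hG2, ?_, ?_⟩
  · rw [hK00]; linear_combination hrel10
  · filter_upwards [hrel, hev] with s hs h
    exact (h.mul (hr' s h)).div (hK' s h) hs.2.2.ne'
  · intro hd
    simp only [Pi.add_apply, Pi.sub_apply, Pi.mul_apply, Pi.div_apply, Pi.pow_apply]
    generalize q 0 = q0 at *
    generalize K 0 = k at *
    generalize r 0 = r00 at *
    generalize p 0 = p0 at *
    have e : (q0 - a*(t1+q0*x1))*k - r00*((q0 - a*(t1+q0*x1))*(1-a*x1)
        - ((t1+q0*x1)*x1+(t2+q0*x2)*x2)) = 0 := by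
      have : r00*((q0 - a*(t1+q0*x1))*k - r00*((q0 - a*(t1+q0*x1))*(1-a*x1)
        - ((t1+q0*x1)*x1+(t2+q0*x2)*x2))) = r00*0 := by
        rw [hK00]
        linear_combination (-((y1+p0*x1)*x1+(y2+p0*x2)*x2))*hrel10
          + ((t1+q0*x1)*x1+(t2+q0*x2)*x2)*rr + ((y1+p0*x1)*x2-(y2+p0*x2)*x1)*hd
      exact mul_left_cancel₀ r0.ne' this
    have hk := k0.ne'
    field_simp
    linear_combination p0*e
  · simp only [Pi.add_apply, Pi.sub_apply, Pi.mul_apply, Pi.pow_apply]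
    have hk := k0.ne'
    have key := alg2 a x1 x2 (y1+p 0*x1) (y2+p 0*x2) (t1+q 0*x1) (t2+q 0*x2) (r 0) (p 0) (q 0) p2
      (q 0 - a*(t1+q 0*x1)) (K 0) _ r0 rr (by linarith) hrel10 (by ring) hK00 rfl (by
        rw [hK00]
        generalize p2 = p2 at *
        linear_combination (r 0)^2*hrel2 - ((r 0)*(q 0 - a*(t1+q 0*x1)) + (y1+p 0*x1)*(t1+q 0*x1) + (y2+p 0*x2)*(t2+q 0*x2))*hrel10 + ((t1+q 0*x1)^2+(t2+q 0*x2)^2)*rr)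
    rw [← key]
    generalize p2 = p2 at *
    generalize q 0 = q0 at *
    generalize K 0 = k at *
    generalize r 0 = r00 at *
    generalize p 0 = p0 at *
    clear key hG2
    field_simp
    ring

lemma secondDeriv {E : Type*} [NormedAddCommGroup E] [NormedSpace ℝ E] (f : E → ℝ) (y t : E)
    (hf : ContDiffAt ℝ 2 f y) (g1 : ℝ → ℝ) (g2 : ℝ)
    (h1 : ∀ᶠ s in nhds (0:ℝ), HasDerivAt (fun s : ℝ => f (y + s • t)) (g1 s) s)
    (h2 : HasDerivAt g1 g2 0) :
    iteratedFDeriv ℝ 2 f y ![t, t] = g2 ∧ fderiv ℝ f y t = g1 0 := by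
  have hl : ∀ s : ℝ, HasDerivAt (fun s : ℝ => y + s • t) t s := by
    intro s
    simpa using! ((hasDerivAt_id s).smul_const t).const_add y
  have hc : Filter.Tendsto (fun s : ℝ => y + s • t) (nhds 0) (nhds y) := by
    have := (hl 0).continuousAt.tendsto
    simpa using this
  have hd : ∀ᶠ s in nhds (0:ℝ), fderiv ℝ f (y + s • t) t = g1 s := by
    filter_upwards [hc.eventually (hf.eventually (by simp)), h1] with s hs h
    have := (hs.differentiableAt (by norm_num)).hasFDerivAt.comp_hasDerivAt s (hl s)
    exact this.unique h
  have hfd : DifferentiableAt ℝ (fderiv ℝ f) (y + (0:ℝ) • t) := by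
    simpa using (hf.fderiv_right (m := 1) (by norm_num)).differentiableAt (by norm_num)
  constructor
  · rw [iteratedFDeriv_two_apply]
    have h3 : HasDerivAt (fun s : ℝ => fderiv ℝ f (y + s • t))
        (fderiv ℝ (fderiv ℝ f) (y + (0:ℝ) • t) t) 0 :=
      hfd.hasFDerivAt.comp_hasDerivAt (0:ℝ) (hl 0)
    have h4 : HasDerivAt (fun s : ℝ => fderiv ℝ f (y + s • t) t)
        (fderiv ℝ (fderiv ℝ f) (y + (0:ℝ) • t) t t) 0 :=
      (ContinuousLinearMap.apply ℝ ℝ t).hasFDerivAt.comp_hasDerivAt (0:ℝ) h3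
    have h5 := h4.unique (h2.congr_of_eventuallyEq hd)
    rw [zero_smul, add_zero] at h5
    exact h5
  · simpa using hd.self_of_nhds

lemma inner2 (a₁ : ℝ) (a v : EuclideanSpace ℝ (Fin 2)) (ha0 : a 0 = a₁) (ha1 : a 1 = 0) :
    ⟪a, v⟫ = a₁ * v 0 := by
  simp [PiLp.inner_apply, Fin.sum_univ_two, ha0, ha1, mul_comm]

lemma normsq2 (v : EuclideanSpace ℝ (Fin 2)) : ‖v‖^2 = v 0^2 + v 1^2 := by
  simp [EuclideanSpace.norm_sq_eq, Fin.sum_univ_two]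

lemma phi_pos (a₁ : ℝ) (ha₁ : 0 ≤ a₁) (ha₁' : a₁ < 1) (w : EuclideanSpace ℝ (Fin 2))
    (hw : w ≠ 0) : 0 < ‖w‖ + a₁ * w 0 := by
  have h := norm_pos_iff.2 hw
  have h2 := normsq2 w
  have : |w 0| ≤ ‖w‖ := abs_le_of_sq_le_sq (by nlinarith [sq_nonneg (w 1)]) h.le
  have := neg_abs_le (w 0)
  nlinarith

lemma geo (a₁ : ℝ) (ha₁ : 0 ≤ a₁) (ha₁' : a₁ < 1)
    (x y : EuclideanSpace ℝ (Fin 2)) (hx : ‖x‖ + a₁ * x 0 < 1) (hy : y ≠ 0)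
    (p : ℝ) (hp : p = ‖y + p • x‖ + a₁ * (y 0 + p * x 0)) :
    0 < p - a₁ * (y 0 + p * x 0) ∧
    (p - a₁ * (y 0 + p * x 0))^2 = (y 0 + p * x 0)^2 + (y 1 + p * x 1)^2 ∧
    0 < (p - a₁ * (y 0 + p * x 0)) * (1 - a₁ * x 0)
      - ((y 0 + p * x 0) * x 0 + (y 1 + p * x 1) * x 1) ∧ 0 < p := by
  have hw : y + p • x ≠ 0 := by
    intro h
    have h0 := congrArg (fun v : EuclideanSpace ℝ (Fin 2) => v 0) h
    simp at h0
    rw [h, h0] at hp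
    simp at hp
    rw [hp] at h
    simp at h
    exact hy h
  have hr : p - a₁ * (y 0 + p * x 0) = ‖y + p • x‖ := by linarith
  have hpp := phi_pos a₁ ha₁ ha₁' _ hw
  have hn := norm_pos_iff.2 hw
  have hi := real_inner_le_norm (y + p • x) x
  have hi2 : ⟪y + p • x, x⟫ = (y 0 + p * x 0) * x 0 + (y 1 + p * x 1) * x 1 := by
    simp [PiLp.inner_apply, Fin.sum_univ_two, mul_comm]
  rw [hi2] at hi
  have hs := normsq2 (y + p • x)
  simp at hs hpp
  rw [hr]
  refine ⟨hn, hs, ?_, by linarith⟩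
  nlinarith

lemma mainCalc (a₁ : ℝ) (ha₁ : 0 ≤ a₁) (ha₁' : a₁ < 1)
    (x : EuclideanSpace ℝ (Fin 2)) (hx : ‖x‖ + a₁ * x 0 < 1)
    (P F : EuclideanSpace ℝ (Fin 2) → ℝ)
    (hP : ∀ y, P y = ‖y + P y • x‖ + a₁ * (y 0 + P y * x 0))
    (hPs : ∀ y, y ≠ 0 → ContDiffAt ℝ (⊤ : ℕ∞) P y)
    (hF : ∀ y, y ≠ 0 → F y = P y * (1 + fderiv ℝ P y x))
    (y t : EuclideanSpace ℝ (Fin 2)) (hy : y ≠ 0) (p w1 w2 r K : ℝ)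
    (hp : p = P y) (hw1 : w1 = y 0 + p * x 0) (hw2 : w2 = y 1 + p * x 1)
    (hr : r = p - a₁ * w1) (hK : K = r * (1 - a₁ * x 0) - (w1 * x 0 + w2 * x 1)) :
    ∃ p1 G2 : ℝ, K * p1 = w1 * t 0 + w2 * t 1 + r * a₁ * t 0 ∧
      iteratedFDeriv ℝ 2 (fun z => F z ^ 2) y ![t, t]
        = 2 * (fderiv ℝ F y t)^2 + 2 * (p * r / K) * G2 ∧
      (w1 * (t 1 + p1 * x 1) - w2 * (t 0 + p1 * x 0) = 0 → fderiv ℝ F y t * K = p1 * r) ∧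
      G2 * K^3 * r^3 = (K^2*r-3*a₁*w2*(w1*x 1-w2*x 0)*K + 3*p*(w1*x 1-w2*x 0)^2)
        * (w1 * (t 1 + p1 * x 1) - w2 * (t 0 + p1 * x 0))^2 := by
  -- along any line
  have hl : ∀ (z u : EuclideanSpace ℝ (Fin 2)) (s : ℝ), HasDerivAt (fun s : ℝ => z + s • u) u s := by
    intro z u s
    simpa using! ((hasDerivAt_id s).smul_const u).const_add z
  have hne : ∀ (z u : EuclideanSpace ℝ (Fin 2)), z ≠ 0 → ∀ᶠ s in nhds (0:ℝ), z + s • u ≠ 0 := by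
    intro z u hz
    have := (hl z u 0).continuousAt
    exact this.eventually_ne (by simpa using hz)
  have hline := fun (z u : EuclideanSpace ℝ (Fin 2)) (hz : z ≠ 0) =>
    line a₁ (x 0) (x 1) (z 0) (z 1) (u 0) (u 1) (fun s => P (z + s • u))
      (by
        have h1 : ContDiffAt ℝ 2 P (z + (0:ℝ) • u) := by
          rw [zero_smul, add_zero]
          exact (hPs z hz).of_le (WithTop.coe_le_coe.2 le_top)
        exact h1.comp (0:ℝ) (by fun_prop))
      (fun s => P (z + s • u) - a₁*(z 0+s*u 0+P (z + s • u)*x 0))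
      (fun s => (P (z + s • u) - a₁*(z 0+s*u 0+P (z + s • u)*x 0))*(1-a₁*x 0)
        - ((z 0+s*u 0+P (z + s • u)*x 0)*x 0+(z 1+s*u 1+P (z + s • u)*x 1)*x 1))
      (fun s => rfl) (fun s => rfl)
      (by
        filter_upwards [hne z u hz] with s hs
        have := geo a₁ ha₁ ha₁' x (z + s • u) hx hs _ (hP _)
        simp only [PiLp.add_apply, PiLp.smul_apply, smul_eq_mul] at this
        exact ⟨this.1, this.2.1, this.2.2.1⟩)
  have hFf : ∀ z, z ≠ 0 → F z = P z * (P z - a₁*(z 0+P z*x 0)) /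
      ((P z - a₁*(z 0+P z*x 0))*(1-a₁*x 0) - ((z 0+P z*x 0)*x 0+(z 1+P z*x 1)*x 1)) := by
    intro z hz
    obtain ⟨p1, G1, G2, h1, h2, -⟩ := hline z x hz
    have h3 : fderiv ℝ P z x = p1 := by
      have h4 : HasFDerivAt P (fderiv ℝ P z) (z + (0:ℝ) • x) := by
        simpa using ((hPs z hz).differentiableAt (by simp)).hasFDerivAt
      exact (h4.comp_hasDerivAt (0:ℝ) (hl z x 0)).unique h1
    have g := (geo a₁ ha₁ ha₁' x z hx hz _ (hP _)).2.2.1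
    simp only [zero_smul, add_zero, zero_mul] at h2
    rw [hF z hz, h3, eq_div_iff g.ne']
    linear_combination (P z) * h2
  have hFs : ContDiffAt ℝ 2 F y := by
    have h1 : ContDiffAt ℝ 2 (fun z => P z * (1 + fderiv ℝ P z x)) y := by
      have h2 : ContDiffAt ℝ 2 P y := (hPs y hy).of_le (WithTop.coe_le_coe.2 le_top)
      have h3 : ContDiffAt ℝ 2 (fderiv ℝ P) y := (hPs y hy).fderiv_right (WithTop.coe_le_coe.2 le_top)
      exact h2.mul (contDiffAt_const.add (h3.clm_apply contDiffAt_const))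
    refine h1.congr_of_eventuallyEq ?_
    filter_upwards [eventually_ne_nhds hy] with z hz
    exact hF z hz
  obtain ⟨p1, G1, G2, h1, h2, h3, h4, h5, h6⟩ := hline y t hy
  have h3' : ∀ᶠ s in nhds (0:ℝ), HasDerivAt (fun s : ℝ => F (y + s • t)) (G1 s) s := by
    filter_upwards [h3, (hne y t hy).eventually_nhds] with s hs h
    refine hs.congr_of_eventuallyEq ?_
    filter_upwards [h] with s' hs'
    rw [hFf _ hs']
    simp only [PiLp.add_apply, PiLp.smul_apply, smul_eq_mul]
  have h30 := h3'.self_of_nhds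
  obtain ⟨-, e1⟩ := secondDeriv F y t hFs G1 G2 h3' h4
  obtain ⟨e2, -⟩ := secondDeriv (fun z => F z ^ 2) y t (hFs.pow 2)
    (fun s => 2 * F (y + s • t) * G1 s) _
    (by
      filter_upwards [h3'] with s hs
      simpa using! hs.pow 2) ((h30.const_mul 2).mul h4)
  have hFy := hFf y hy
  simp only [zero_smul, add_zero, zero_mul] at h2 h5 h6 e1 e2
  subst hp
  rw [← hw1, ← hw2] at h2 h5 h6 hFy
  rw [← hr] at h2 h5 h6 hFy
  rw [← hK] at h2 h5 h6 hFy
  refine ⟨p1, G2, h2, ?_, ?_, h6⟩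
  · rw [e2, e1, ← hFy]; ring
  · intro hd; rw [e1]; exact h5 hd

lemma posdef_iff (a₁ : ℝ) (ha₁ : 0 ≤ a₁) (ha₁' : a₁ < 1)
    (x : EuclideanSpace ℝ (Fin 2)) (hx : ‖x‖ + a₁ * x 0 < 1)
    (P F : EuclideanSpace ℝ (Fin 2) → ℝ)
    (hP : ∀ y, P y = ‖y + P y • x‖ + a₁ * (y 0 + P y * x 0))
    (hPu : ∀ y, ∀ t : ℝ, t = ‖y + t • x‖ + a₁ * (y 0 + t * x 0) → t = P y)
    (hPs : ∀ y, y ≠ 0 → ContDiffAt ℝ (⊤ : ℕ∞) P y)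
    (hF : ∀ y, y ≠ 0 → F y = P y * (1 + fderiv ℝ P y x)) :
    (∀ y : EuclideanSpace ℝ (Fin 2), y ≠ 0 → ∀ t : EuclideanSpace ℝ (Fin 2), t ≠ 0 →
      0 < iteratedFDeriv ℝ 2 (fun z => F z ^ 2) y ![t, t]) ↔
    ∀ c s : ℝ, c^2+s^2 = 1 →
      0 < (1 - a₁*x 0 - (c*x 0+s*x 1))^2 - 3*a₁*s*(c*x 1-s*x 0)*(1 - a₁*x 0 - (c*x 0+s*x 1))
        + 3*(1+a₁*c)*(c*x 1-s*x 0)^2 := by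
  constructor
  · intro h c s hcs
    by_contra hQ
    push Not at hQ
    set e : EuclideanSpace ℝ (Fin 2) := !₂[c, s] with he
    have e0 : e 0 = c := rfl
    have e1 : e 1 = s := rfl
    have hen : ‖e‖ = 1 := by
      have := normsq2 e
      rw [e0, e1, hcs] at this
      nlinarith [norm_nonneg e]
    have hene : e ≠ 0 := by
      intro h; rw [h] at hen; simp at hen
    have hφ := phi_pos a₁ ha₁ ha₁' e hene
    rw [hen, e0] at hφ
    set y : EuclideanSpace ℝ (Fin 2) := e - (1+a₁*c) • x with hy
    have y0 : y 0 = c - (1+a₁*c)*x 0 := by simp [hy, e0]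
    have y1 : y 1 = s - (1+a₁*c)*x 1 := by simp [hy, e1]
    have hPy : 1+a₁*c = P y := by
      apply hPu
      rw [y0, hy, sub_add_cancel, hen]; ring
    have hyne : y ≠ 0 := by
      intro h0
      have h1 : e = (1+a₁*c) • x := sub_eq_zero.1 h0
      have h2 : ‖e‖ = (1+a₁*c) * ‖x‖ := by rw [h1, norm_smul, Real.norm_of_nonneg hφ.le]
      have h3 : c = (1+a₁*c) * x 0 := by
        have := congrArg (fun v : EuclideanSpace ℝ (Fin 2) => v 0) h1
        simpa [e0] using this
      rw [hen] at h2
      have : (1+a₁*c) * (‖x‖ + a₁*x 0) = (1+a₁*c) * 1 := by linear_combination -h2 - a₁*h3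
      have := mul_left_cancel₀ hφ.ne' this
      linarith
    obtain ⟨t, htne, ht⟩ : ∃ t : EuclideanSpace ℝ (Fin 2), t ≠ 0 ∧ fderiv ℝ F y t = 0 := by
      have : LinearMap.ker ((fderiv ℝ F y : EuclideanSpace ℝ (Fin 2) →L[ℝ] ℝ) : EuclideanSpace ℝ (Fin 2) →ₗ[ℝ] ℝ) ≠ ⊥ :=
        LinearMap.ker_ne_bot_of_finrank_lt (by simp)
      obtain ⟨t, h1, h2⟩ := Submodule.exists_mem_ne_zero_of_ne_bot this
      exact ⟨t, h2, h1⟩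
    obtain ⟨p1, G2, -, h2, -, h4⟩ := mainCalc a₁ ha₁ ha₁' x hx P F hP hPs hF y t hyne (1+a₁*c) c s 1
      (1 - a₁*x 0 - (c*x 0+s*x 1)) hPy (by rw [y0]; ring) (by rw [y1]; ring) (by ring) (by ring)
    have hk := (geo a₁ ha₁ ha₁' x y hx hyne (P y) (hP y)).2.2.1
    rw [← hPy, y0, y1] at hk
    replace hk : 0 < 1 - a₁*x 0 - (c*x 0+s*x 1) := by linarith
    have hpos := h y hyne t htne
    rw [h2, ht] at hpos
    have hG : 0 < G2 := by
      have h6 : 0 < (1+a₁*c) * 1 / (1 - a₁*x 0 - (c*x 0+s*x 1)) := by positivity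
      by_contra hh
      push Not at hh
      have h8 := mul_nonpos_of_nonneg_of_nonpos h6.le hh
      clear h4 h2 hQ h
      rw [mul_assoc] at hpos
      linarith
    have h7 : 0 < G2 * (1 - a₁*x 0 - (c*x 0+s*x 1))^3 * 1^3 := by positivity
    rw [h4] at h7
    refine absurd h7 (not_lt.2 ?_)
    apply mul_nonpos_of_nonpos_of_nonneg _ (sq_nonneg _)
    linarith
  · intro h y hy t ht
    obtain ⟨g1, g2, g3, g4⟩ := geo a₁ ha₁ ha₁' x y hx hy (P y) (hP y)
    obtain ⟨p1, G2, k1, k2, k3, k4⟩ := mainCalc a₁ ha₁ ha₁' x hx P F hP hPs hF y t hy _ _ _ _ _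
      rfl rfl rfl rfl rfl
    have hpr : P y = P y - a₁*(y 0 + P y * x 0) + a₁*(y 0 + P y * x 0) := by ring
    generalize hr : P y - a₁*(y 0 + P y * x 0) = r at *
    generalize hK : r * (1 - a₁ * x 0) - ((y 0 + P y * x 0) * x 0 + (y 1 + P y * x 1) * x 1) = K at *
    generalize y 0 + P y * x 0 = w1 at *
    generalize y 1 + P y * x 1 = w2 at *
    generalize P y = p at *
    rw [k2]
    have hQ : 0 < K^2*r-3*a₁*w2*(w1*x 1-w2*x 0)*K + 3*p*(w1*x 1-w2*x 0)^2 := by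
      have hq := h (w1/r) (w2/r) (by field_simp; linarith)
      have hq2 := mul_pos (pow_pos g1 3) hq
      have : r^3 * ((1 - a₁*x 0 - (w1/r*x 0+w2/r*x 1))^2 - 3*a₁*(w2/r)*(w1/r*x 1-w2/r*x 0)*(1 - a₁*x 0 - (w1/r*x 0+w2/r*x 1))
        + 3*(1+a₁*(w1/r))*(w1/r*x 1-w2/r*x 0)^2) = K^2*r-3*a₁*w2*(w1*x 1-w2*x 0)*K + 3*p*(w1*x 1-w2*x 0)^2 := by
        rw [← hK, hpr]
        field_simp
      rwa [this] at hq2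
    have hpk : 0 < p * r / K := by positivity
    by_cases hd : w1 * (t 1 + p1 * x 1) - w2 * (t 0 + p1 * x 0) = 0
    · have hG : G2 = 0 := by
        rw [hd] at k4
        have : K^3*r^3 ≠ 0 := by positivity
        have h5 : G2 * (K^3*r^3) = 0 := by linarith
        exact (mul_eq_zero.1 h5).resolve_right this
      have hf : fderiv ℝ F y t ≠ 0 := by
        intro h0
        have h5 := k3 hd
        rw [h0, zero_mul] at h5
        have hp1 : p1 = 0 := (mul_eq_zero.1 h5.symm).resolve_right g1.ne'
        rw [hp1] at hd k1
        simp only [zero_mul, add_zero, mul_zero] at hd k1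
        have t0 : t 0 = 0 := by
          have h6 : (r*p) * t 0 = 0 := by
            rw [hpr]; linear_combination -w1*k1 + t 0 * g2 - w2*hd
          exact (mul_eq_zero.1 h6).resolve_left (by positivity)
        have t1 : t 1 = 0 := by
          rw [t0] at hd k1
          have h6 : r^2 * t 1 = 0 := by linear_combination t 1 * g2 + w1*hd - w2*k1
          exact (mul_eq_zero.1 h6).resolve_left (by positivity)
        apply ht
        ext i
        fin_cases i
        · simpa using t0
        · simpa using t1
      rw [hG]
      positivity
    · have hG : 0 < G2 := by
        have h5 : 0 < G2 * (K^3 * r^3) := by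
          rw [← mul_assoc, k4]; positivity
        exact pos_of_mul_pos_left h5 (by positivity)
      positivity

lemma Qid (a x1 x2 c s : ℝ) (hcs : c^2+s^2 = 1) :
    4*(x1^2+x2^2)*((1 - a*x1 - (c*x1+s*x2))^2 - 3*a*s*(c*x2-s*x1)*(1 - a*x1 - (c*x1+s*x2))
        + 3*(1+a*c)*(c*x2-s*x1)^2) = ((x1^2+x2^2)*(2+3*a*c) - (2+a*x1)*(c*x1+s*x2))^2
        + ((2+a*x1)^2 - (9*a^2-8)*(x1^2+x2^2))*(c*x2-s*x1)^2 := by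
  have hR : x1^2+x2^2 = (c*x1+s*x2)^2+(c*x2-s*x1)^2 := by
    linear_combination (-(x1^2+x2^2))*hcs
  have hx : a*x1 = a*((c*x1+s*x2)*c-(c*x2-s*x1)*s) := by linear_combination (-a*x1)*hcs
  rw [hR, hx]
  generalize c*x1+s*x2 = α
  generalize c*x2-s*x1 = β
  linear_combination (-9*a^2*β^2*(α^2+β^2))*hcs

lemma Qpos (a x1 x2 c s : ℝ) (hcs : c^2+s^2 = 1) (hK : 0 < 1 - a*x1 - (c*x1+s*x2))
    (hH : 0 < (2+a*x1)^2 - (9*a^2-8)*(x1^2+x2^2)) :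
    0 < (1 - a*x1 - (c*x1+s*x2))^2 - 3*a*s*(c*x2-s*x1)*(1 - a*x1 - (c*x1+s*x2))
        + 3*(1+a*c)*(c*x2-s*x1)^2 := by
  by_cases hb : c*x2-s*x1 = 0
  · rw [hb]; nlinarith
  have hR : 0 < x1^2+x2^2 := by
    by_contra h
    have h1 : x1 = 0 := by nlinarith [sq_nonneg x1, sq_nonneg x2]
    have h2 : x2 = 0 := by nlinarith [sq_nonneg x1, sq_nonneg x2]
    apply hb; rw [h1, h2]; ring
  have key := Qid a x1 x2 c s hcs
  have : 0 < 4*(x1^2+x2^2)*((1 - a*x1 - (c*x1+s*x2))^2 - 3*a*s*(c*x2-s*x1)*(1 - a*x1 - (c*x1+s*x2))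
        + 3*(1+a*c)*(c*x2-s*x1)^2) := by rw [key]; positivity
  exact pos_of_mul_pos_right this (by positivity)

lemma Qneg (a x1 x2 : ℝ) (hD : 0 ≤ 9*a^2-8) (hx : a*x1 ≤ 1)
    (hH : (2+a*x1)^2 - (9*a^2-8)*(x1^2+x2^2) ≤ 0) :
    ∃ c s : ℝ, c^2+s^2 = 1 ∧ (1 - a*x1 - (c*x1+s*x2))^2
        - 3*a*s*(c*x2-s*x1)*(1 - a*x1 - (c*x1+s*x2)) + 3*(1+a*c)*(c*x2-s*x1)^2 ≤ 0 := by
  have hR : 0 < x1^2+x2^2 := by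
    by_contra h
    have h1 : x1 = 0 := by nlinarith [sq_nonneg x1, sq_nonneg x2]
    have h2 : x2 = 0 := by nlinarith [sq_nonneg x1, sq_nonneg x2]
    rw [h1, h2] at hH; norm_num at hH
  obtain ⟨R, hRd⟩ : ∃ R, R = x1^2+x2^2 := ⟨_, rfl⟩
  obtain ⟨u, hu⟩ : ∃ u, u = 3*a*R - (2+a*x1)*x1 := ⟨_, rfl⟩
  obtain ⟨v, hv⟩ : ∃ v, v = -(2+a*x1)*x2 := ⟨_, rfl⟩
  rw [← hRd] at hR hH
  have hN : 4*R^2 ≤ u^2+v^2 := by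
    have e : u^2+v^2-4*R^2 = R*((9*a^2-8+4)*R - 5*(2+a*x1)^2+12*(2+a*x1)) := by
      rw [hu, hv]; linear_combination (-(2+a*x1)^2)*hRd
    have : 0 ≤ (9*a^2-8+4)*R - 5*(2+a*x1)^2+12*(2+a*x1) := by
      have h1 : (a*x1)^2 ≤ a^2*R := by rw [hRd]; nlinarith [sq_nonneg (a*x2)]
      nlinarith
    have := mul_nonneg hR.le this
    linarith
  have hNp : 0 < u^2+v^2 := by nlinarith
  obtain ⟨h, hh⟩ : ∃ h, h = Real.sqrt (u^2+v^2-4*R^2) := ⟨_, rfl⟩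
  have hh2 : h^2 = u^2+v^2-4*R^2 := by rw [hh, Real.sq_sqrt (by linarith)]
  have hc : ((-2*R*u-v*h)/(u^2+v^2))^2+((-2*R*v+u*h)/(u^2+v^2))^2 = 1 := by
    field_simp
    linear_combination (u^2+v^2)*hh2
  have hL : 2*R + u*((-2*R*u-v*h)/(u^2+v^2)) + v*((-2*R*v+u*h)/(u^2+v^2)) = 0 := by
    field_simp; ring
  refine ⟨_, _, hc, ?_⟩
  have key := Qid a x1 x2 _ _ hc
  generalize (-2*R*u-v*h)/(u^2+v^2) = c at *
  generalize (-2*R*v+u*h)/(u^2+v^2) = s at *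
  have hL' : (x1^2+x2^2)*(2+3*a*c) - (2+a*x1)*(c*x1+s*x2) = 0 := by
    rw [← hRd, ← hL, hu, hv]; ring
  rw [hL', ← hRd] at key
  by_contra hcon
  push Not at hcon
  have h1 := mul_pos (by positivity : 0 < 4*R) hcon
  rw [key] at h1
  have := mul_nonpos_of_nonpos_of_nonneg hH (sq_nonneg (c*x2-s*x1))
  linarith

/-- For the Randers norm `φ(y) = ‖y‖ + ⟨a,y⟩` with `a = (a₁, 0)`,
`a₁ ∈ [0,1)`, the Funk metric `P` of `Ω = {φ < 1}` and the associated projectively flat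
metric of zero flag curvature `F(x,y) = P(x,y)·(1 + D_yP(x,y)(x))`, the set `𝒪` where
`F(x,·)` is a Minkowski norm is: all of `Ω` when `a₁ < 2√2/3`; `Ω` minus the vertical
line `x₁ = −3√2/2` when `a₁ = 2√2/3`; and the part of `Ω` outside a hyperbola when
`2√2/3 < a₁ < 1`. -/
theorem stmt_18 (a₁ : ℝ) (ha₁ : 0 ≤ a₁) (ha₁' : a₁ < 1)
    (a : EuclideanSpace ℝ (Fin 2)) (ha0 : a 0 = a₁) (ha1 : a 1 = 0)
    -- `P` is the unique (smooth) Funk metric of `Ω = {x | ‖x‖ + ⟨a,x⟩ < 1}`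
    (P : EuclideanSpace ℝ (Fin 2) → EuclideanSpace ℝ (Fin 2) → ℝ)
    (hP : ∀ x, ‖x‖ + ⟪a, x⟫ < 1 → ∀ y,
      P x y = ‖y + P x y • x‖ + ⟪a, y + P x y • x⟫)
    (hPuniq : ∀ x, ‖x‖ + ⟪a, x⟫ < 1 → ∀ y, ∀ t : ℝ,
      t = ‖y + t • x‖ + ⟪a, y + t • x⟫ → t = P x y)
    (hPsmooth : ContDiffOn ℝ (⊤ : ℕ∞)
      (fun p : EuclideanSpace ℝ (Fin 2) × EuclideanSpace ℝ (Fin 2) => P p.1 p.2)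
      ({x | ‖x‖ + ⟪a, x⟫ < 1} ×ˢ {y | y ≠ 0}))
    -- `F` is the associated metric
    (F : EuclideanSpace ℝ (Fin 2) → EuclideanSpace ℝ (Fin 2) → ℝ)
    (hF : ∀ x, ‖x‖ + ⟪a, x⟫ < 1 → ∀ y : EuclideanSpace ℝ (Fin 2), y ≠ 0 →
      F x y = P x y * (1 + fderiv ℝ (fun z => P x z) y x))
    -- `O` is the set on which `F(x,·)` is a Minkowski norm
    (O : Set (EuclideanSpace ℝ (Fin 2)))
    (hO : O = {x | ‖x‖ + ⟪a, x⟫ < 1 ∧ ∀ y : EuclideanSpace ℝ (Fin 2), y ≠ 0 →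
      ∀ θ : EuclideanSpace ℝ (Fin 2), θ ≠ 0 →
        0 < iteratedFDeriv ℝ 2 (fun z => F x z ^ 2) y ![θ, θ]}) :
    -- (1)
    (a₁ < 2 * Real.sqrt 2 / 3 → O = {x | ‖x‖ + ⟪a, x⟫ < 1}) ∧
    -- (2)
    (a₁ = 2 * Real.sqrt 2 / 3 →
      O = {x | ‖x‖ + ⟪a, x⟫ < 1} \ {x : EuclideanSpace ℝ (Fin 2) | x 0 = -(3 * Real.sqrt 2 / 2)}) ∧
    -- (3)
    (2 * Real.sqrt 2 / 3 < a₁ →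
      O = {x | ‖x‖ + ⟪a, x⟫ < 1} ∩
        {x : EuclideanSpace ℝ (Fin 2) |
          (9 * a₁ ^ 2 - 8) / (2 * (1 - a₁ ^ 2)) <
            8 * (1 - a₁ ^ 2) * (x 0 + a₁ / (4 * (1 - a₁ ^ 2))) ^ 2 -
              (9 * a₁ ^ 2 - 8) * (x 1) ^ 2}) := by
  have hinner := fun v => inner2 a₁ a v ha0 ha1
  have hsq2 : Real.sqrt 2 ^ 2 = 2 := Real.sq_sqrt (by norm_num)
  have hs0 : 0 < Real.sqrt 2 := by positivity
  have hiff : ∀ x, x ∈ O ↔ ‖x‖ + ⟪a, x⟫ < 1 ∧ ∀ c s : ℝ, c^2+s^2 = 1 →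
      0 < (1 - a₁*x 0 - (c*x 0+s*x 1))^2 - 3*a₁*s*(c*x 1-s*x 0)*(1 - a₁*x 0 - (c*x 0+s*x 1))
        + 3*(1+a₁*c)*(c*x 1-s*x 0)^2 := by
    intro x
    rw [hO]
    simp only [Set.mem_setOf_eq]
    refine and_congr_right fun hx => ?_
    refine posdef_iff a₁ ha₁ ha₁' x (by rwa [hinner] at hx) (P x) (F x) ?_ ?_ ?_ (hF x hx)
    · intro y
      have := hP x hx y
      rw [hinner] at this
      simpa using this
    · intro y t ht
      apply hPuniq x hx y t
      rw [hinner]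
      simpa using ht
    · intro y hy
      have h1 : ContDiffOn ℝ (⊤ : ℕ∞) (fun y => P x y) {y | y ≠ 0} :=
        hPsmooth.comp (f := fun y => (x, y)) (by fun_prop) (fun z hz => ⟨hx, hz⟩)
      exact h1.contDiffAt (isOpen_ne.mem_nhds hy)
  have hpos : ∀ x : EuclideanSpace ℝ (Fin 2), ‖x‖ + ⟪a, x⟫ < 1 →
      0 < (2+a₁*x 0)^2 - (9*a₁^2-8)*(x 0^2+x 1^2) → x ∈ O := by
    intro x hx hH
    refine (hiff x).2 ⟨hx, fun c s hcs => Qpos a₁ _ _ c s hcs ?_ hH⟩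
    rw [hinner] at hx
    have h1 := normsq2 x
    have h2 : c*x 0+s*x 1 ≤ ‖x‖ := by
      apply le_of_sq_le_sq _ (norm_nonneg x)
      rw [h1]
      nlinarith [sq_nonneg (c*x 1-s*x 0)]
    linarith
  have hneg : 0 ≤ 9*a₁^2-8 → ∀ x : EuclideanSpace ℝ (Fin 2), x ∈ O →
      0 < (2+a₁*x 0)^2 - (9*a₁^2-8)*(x 0^2+x 1^2) := by
    intro hD x hx
    obtain ⟨h1, h2⟩ := (hiff x).1 hx
    by_contra hcon
    push Not at hcon
    rw [hinner] at h1
    obtain ⟨c, s, h3, h4⟩ := Qneg a₁ (x 0) (x 1) hD (by linarith [norm_nonneg x]) hcon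
    linarith [h2 c s h3]
  have hsub : ∀ x, x ∈ O → ‖x‖ + ⟪a, x⟫ < 1 := fun x hx => ((hiff x).1 hx).1
  refine ⟨fun h => ?_, fun h => ?_, fun h => ?_⟩
  · ext x
    refine ⟨hsub x, fun hx => hpos x hx ?_⟩
    have hD : 9*a₁^2 < 8 := by nlinarith
    by_cases hR : x 0^2+x 1^2 = 0
    · have : x 0 = 0 := by nlinarith [sq_nonneg (x 0), sq_nonneg (x 1)]
      rw [hR, this]; norm_num
    · have : 0 < x 0^2+x 1^2 := lt_of_le_of_ne (by positivity) (Ne.symm hR)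
      nlinarith [sq_nonneg (2+a₁*x 0)]
  · have hD : 9*a₁^2-8 = 0 := by rw [h]; nlinarith
    have hm : ∀ x : EuclideanSpace ℝ (Fin 2), 2+a₁*x 0 = 0 ↔ x 0 = -(3 * Real.sqrt 2 / 2) := by
      intro x
      have e : 2 + a₁*x 0 = (2 * Real.sqrt 2 / 3)*(x 0 - -(3 * Real.sqrt 2 / 2)) := by
        rw [h]; linear_combination -hsq2
      rw [e, mul_eq_zero, sub_eq_zero]
      exact or_iff_right (by positivity)
    ext x
    simp only [Set.mem_diff, Set.mem_setOf_eq, ← hm]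
    constructor
    · intro hx
      refine ⟨hsub x hx, fun h0 => ?_⟩
      have := hneg hD.ge x hx
      rw [h0, hD] at this
      norm_num at this
    · rintro ⟨h1, h2⟩
      apply hpos x h1
      rw [hD, zero_mul, sub_zero]
      positivity
  · have hD : 0 ≤ 9*a₁^2-8 := by nlinarith
    have h1a : 0 < 1 - a₁^2 := by nlinarith
    ext x
    have e : 8 * (1 - a₁ ^ 2) * (x 0 + a₁ / (4 * (1 - a₁ ^ 2))) ^ 2 -
              (9 * a₁ ^ 2 - 8) * (x 1) ^ 2 - (9 * a₁ ^ 2 - 8) / (2 * (1 - a₁ ^ 2))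
        = (2+a₁*x 0)^2 - (9*a₁^2-8)*(x 0^2+x 1^2) := by
      field_simp
      ring
    simp only [Set.mem_inter_iff, Set.mem_setOf_eq]
    rw [← sub_pos (b := (9 * a₁ ^ 2 - 8) / (2 * (1 - a₁ ^ 2))), e]
    exact ⟨fun hx => ⟨hsub x hx, hneg hD x hx⟩, fun hx => hpos x hx.1 hx.2⟩
end

section
/- Let n ≥ 1 and define p : ℝⁿ → ℝⁿ × ℝ by p(x) := (1 + ‖x‖²)^{−1/2} • (x, 1), where ℝⁿ × ℝ carries the Euclidean norm. Let w ∈ ℝⁿ with ‖w‖ = 1, let V ∈ ℝⁿ with ⟨w, V⟩ = 0, and let v < 0. Then for x ∈ ℝⁿ and y ∈ ℝⁿ \ {0} the following are equivalent: (i) as h → +∞, p(x + h•y) tends to (w, 0) and h² • (d/dh)[p(x + h•y)] tends to (V, v); (ii) there exists λ ∈ ℝ with y = (−1/v)•w and x = (1/v)•(V − λ•w). Consequently, the set of all pairs (x,y) satisfying (i) is exactly the one-parameter family {((1/v)•(V − λ•w), (−1/v)•w) : λ ∈ ℝ}; in particular all such pairs determine the same straight line in ℝⁿ. -/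
open scoped RealInnerProductSpace

noncomputable section

/-- The diffeomorphism `p(x) = (x, 1)/√(1 + ‖x‖²)` from `ℝⁿ` onto the open upper
hemisphere of the unit sphere of `ℝⁿ × ℝ ≅ ℝ^{n+1}`. -/
def sphereMap (n : ℕ) (x : EuclideanSpace ℝ (Fin n)) : EuclideanSpace ℝ (Fin n) × ℝ :=
  (Real.sqrt (1 + ‖x‖ ^ 2))⁻¹ • ((x, 1) : EuclideanSpace ℝ (Fin n) × ℝ)

/-- Condition (i): as `h → +∞`, `p(x + h•y)` tends to `(w, 0)` and
`h² • (d/dh)[p(x + h•y)]` tends to `(V, v)`. -/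
def TendsCond (n : ℕ) (w V : EuclideanSpace ℝ (Fin n)) (v : ℝ)
    (x y : EuclideanSpace ℝ (Fin n)) : Prop :=
  Filter.Tendsto (fun h : ℝ => sphereMap n (x + h • y)) Filter.atTop
      (nhds ((w, 0) : EuclideanSpace ℝ (Fin n) × ℝ)) ∧
  Filter.Tendsto (fun h : ℝ => h ^ 2 • deriv (fun s : ℝ => sphereMap n (x + s • y)) h)
      Filter.atTop (nhds ((V, v) : EuclideanSpace ℝ (Fin n) × ℝ))

/-- curve norm -/
theorem aux_norm {n : ℕ} (x y : EuclideanSpace ℝ (Fin n)) (s : ℝ) :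
    1 + ‖x + s • y‖ ^ 2 = (1 + ‖x‖ ^ 2) + 2 * ⟪x, y⟫ * s + ‖y‖ ^ 2 * s ^ 2 := by
  rw [norm_add_sq_real, inner_smul_right, norm_smul, mul_pow, Real.norm_eq_abs, sq_abs]
  ring

theorem aux_deriv {n : ℕ} (x y : EuclideanSpace ℝ (Fin n)) (h : ℝ) :
    deriv (fun s : ℝ => sphereMap n (x + s • y)) h =
      ((Real.sqrt (1 + ‖x + h • y‖ ^ 2))⁻¹) ^ 3 •
        (((1 + ‖x‖ ^ 2 + ⟪x, y⟫ * h) • y - (⟪x, y⟫ + ‖y‖ ^ 2 * h) • x,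
          -(⟪x, y⟫ + ‖y‖ ^ 2 * h)) : EuclideanSpace ℝ (Fin n) × ℝ) := by
  have hpos : 0 < 1 + ‖x + h • y‖ ^ 2 := by positivity
  have hD : HasDerivAt (fun s : ℝ => 1 + ‖x + s • y‖ ^ 2)
      (2 * ⟪x, y⟫ + ‖y‖ ^ 2 * (2 * h)) h := by
    rw [show (fun s : ℝ => 1 + ‖x + s • y‖ ^ 2) = _ from funext (aux_norm x y)]
    have h1 := ((hasDerivAt_id h).const_mul (2 * ⟪x, y⟫)).const_add (1 + ‖x‖ ^ 2)
    have h2 := ((hasDerivAt_id h).pow 2).const_mul (‖y‖ ^ 2)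
    refine HasDerivAt.congr_deriv (h1.add h2) ?_
    simp
  have hS := (hD.sqrt hpos.ne').inv (Real.sqrt_pos.2 hpos).ne'
  have hL : HasDerivAt (fun s : ℝ => ((x + s • y, 1) : EuclideanSpace ℝ (Fin n) × ℝ))
      (y, 0) h := by
    have h1 : HasDerivAt (fun s : ℝ => x + s • y) y h := by
      simpa using ((hasDerivAt_id h).smul_const y).const_add x
    exact h1.prodMk (hasDerivAt_const h 1)
  have hP := hS.smul hL
  have hP' : HasDerivAt (fun s : ℝ => sphereMap n (x + s • y)) _ h := hP
  rw [hP'.deriv]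
  have hN := aux_norm x y h
  have hq := Real.sq_sqrt hpos.le
  have hq0 := Real.sqrt_pos.2 hpos
  simp only [Pi.inv_apply]
  generalize hSd : Real.sqrt (1 + ‖x + h • y‖ ^ 2) = S at *
  rw [hN] at hq
  have key : S⁻¹ = (S⁻¹) ^ 3 * ((1 + ‖x‖ ^ 2) + 2 * ⟪x, y⟫ * h + ‖y‖ ^ 2 * h ^ 2) := by
    rw [← hq]; field_simp
  have key2 : -((2 * ⟪x, y⟫ + ‖y‖ ^ 2 * (2 * h)) / (2 * S)) / S ^ 2
      = -(S⁻¹) ^ 3 * (⟪x, y⟫ + ‖y‖ ^ 2 * h) := by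
    field_simp
  rw [key2]
  ext1
  · simp only [Prod.fst_add, Prod.smul_fst]
    nth_rewrite 1 [key]
    module
  · simp only [Prod.snd_add, Prod.smul_snd, smul_eq_mul]
    ring

theorem aux_sqrt {n : ℕ} (x y : EuclideanSpace ℝ (Fin n)) (h : ℝ) (hh : 0 < h) :
    Real.sqrt (1 + ‖x + h • y‖ ^ 2) =
      h * Real.sqrt ((1 + ‖x‖ ^ 2) * h⁻¹ ^ 2 + 2 * ⟪x, y⟫ * h⁻¹ + ‖y‖ ^ 2) := by
  have : 1 + ‖x + h • y‖ ^ 2 =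
      h ^ 2 * ((1 + ‖x‖ ^ 2) * h⁻¹ ^ 2 + 2 * ⟪x, y⟫ * h⁻¹ + ‖y‖ ^ 2) := by
    rw [aux_norm]; field_simp
  rw [this, Real.sqrt_mul (sq_nonneg h), Real.sqrt_sq hh.le]

theorem aux_E {n : ℕ} (x y : EuclideanSpace ℝ (Fin n)) (hy : y ≠ 0) :
    ContinuousAt (fun t : ℝ =>
      (Real.sqrt ((1 + ‖x‖ ^ 2) * t ^ 2 + 2 * ⟪x, y⟫ * t + ‖y‖ ^ 2))⁻¹) 0 := by
  apply ContinuousAt.inv₀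
  · fun_prop
  · simpa using hy

theorem aux_lim1 {n : ℕ} (x y : EuclideanSpace ℝ (Fin n)) (hy : y ≠ 0) :
    Filter.Tendsto (fun h : ℝ => sphereMap n (x + h • y)) Filter.atTop
      (nhds ((‖y‖⁻¹ • y, 0) : EuclideanSpace ℝ (Fin n) × ℝ)) := by
  have hc : ContinuousAt (fun t : ℝ =>
      (Real.sqrt ((1 + ‖x‖ ^ 2) * t ^ 2 + 2 * ⟪x, y⟫ * t + ‖y‖ ^ 2))⁻¹ •
        ((t • x + y, t) : EuclideanSpace ℝ (Fin n) × ℝ)) 0 :=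
    (aux_E x y hy).smul (by fun_prop)
  have ht := hc.tendsto.comp (tendsto_inv_atTop_zero (𝕜 := ℝ))
  have he : (Real.sqrt ((1 + ‖x‖ ^ 2) * (0 : ℝ) ^ 2 + 2 * ⟪x, y⟫ * 0 + ‖y‖ ^ 2))⁻¹ •
        (((0 : ℝ) • x + y, (0 : ℝ)) : EuclideanSpace ℝ (Fin n) × ℝ) = (‖y‖⁻¹ • y, 0) := by
    simp
  rw [he] at ht
  refine ht.congr' ?_
  filter_upwards [Filter.eventually_gt_atTop 0] with h hh
  simp only [Function.comp, sphereMap]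
  rw [aux_sqrt x y h hh, mul_inv, mul_comm h⁻¹ (Real.sqrt _)⁻¹, mul_smul]
  congr 1
  ext1
  · simp [smul_smul, hh.ne']
  · simp

theorem aux_lim2 {n : ℕ} (x y : EuclideanSpace ℝ (Fin n)) (hy : y ≠ 0) :
    Filter.Tendsto (fun h : ℝ => h ^ 2 • deriv (fun s : ℝ => sphereMap n (x + s • y)) h)
      Filter.atTop
      (nhds (((‖y‖⁻¹) ^ 3 • (⟪x, y⟫ • y - ‖y‖ ^ 2 • x), -‖y‖⁻¹) :
        EuclideanSpace ℝ (Fin n) × ℝ)) := by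
  have hc : ContinuousAt (fun t : ℝ =>
      ((Real.sqrt ((1 + ‖x‖ ^ 2) * t ^ 2 + 2 * ⟪x, y⟫ * t + ‖y‖ ^ 2))⁻¹) ^ 3 •
        ((((1 + ‖x‖ ^ 2) * t + ⟪x, y⟫) • y - (⟪x, y⟫ * t + ‖y‖ ^ 2) • x,
          -(⟪x, y⟫ * t + ‖y‖ ^ 2)) : EuclideanSpace ℝ (Fin n) × ℝ)) 0 :=
    ((aux_E x y hy).pow 3).smul (by fun_prop)
  have ht := hc.tendsto.comp (tendsto_inv_atTop_zero (𝕜 := ℝ))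
  have hy' : ‖y‖ ≠ 0 := by simpa using hy
  have he : ((Real.sqrt ((1 + ‖x‖ ^ 2) * (0 : ℝ) ^ 2 + 2 * ⟪x, y⟫ * 0 + ‖y‖ ^ 2))⁻¹) ^ 3 •
        ((((1 + ‖x‖ ^ 2) * (0 : ℝ) + ⟪x, y⟫) • y - (⟪x, y⟫ * 0 + ‖y‖ ^ 2) • x,
          -(⟪x, y⟫ * 0 + ‖y‖ ^ 2)) : EuclideanSpace ℝ (Fin n) × ℝ) =
        ((‖y‖⁻¹) ^ 3 • (⟪x, y⟫ • y - ‖y‖ ^ 2 • x), -‖y‖⁻¹) := by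
    ext1
    · simp
    · simp
      field_simp
  rw [he] at ht
  refine ht.congr' ?_
  filter_upwards [Filter.eventually_gt_atTop 0] with h hh
  rw [aux_deriv, aux_sqrt x y h hh]
  simp only [Function.comp]
  generalize (Real.sqrt ((1 + ‖x‖ ^ 2) * h⁻¹ ^ 2 + 2 * ⟪x, y⟫ * h⁻¹ + ‖y‖ ^ 2)) = S
  rw [mul_inv, mul_pow]
  ext1
  · simp only [Prod.smul_fst]
    match_scalars <;> field_simp
  · simp only [Prod.smul_snd, smul_eq_mul]
    field_simp

theorem aux_iff {n : ℕ} (w V : EuclideanSpace ℝ (Fin n)) (hw : ‖w‖ = 1) (hwV : ⟪w, V⟫ = 0)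
    (v : ℝ) (hv : v < 0) (x y : EuclideanSpace ℝ (Fin n)) (hy : y ≠ 0) :
    TendsCond n w V v x y ↔
        ∃ lam : ℝ, y = (-1 / v) • w ∧ x = (1 / v) • (V - lam • w) := by
  have hy' : ‖y‖ ≠ 0 := by simpa using hy
  have hv0 := hv.ne
  constructor
  · rintro ⟨h1, h2⟩
    have e1 := tendsto_nhds_unique h1 (aux_lim1 x y hy)
    have e2 := tendsto_nhds_unique h2 (aux_lim2 x y hy)
    obtain ⟨e1, -⟩ := Prod.mk.inj e1
    obtain ⟨e2, e3⟩ := Prod.mk.inj e2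
    have hr : ‖y‖ = -1 / v := by rw [e3]; field_simp
    have hyw : y = (-1 / v) • w := by
      rw [e1, ← hr, smul_smul, mul_inv_cancel₀ hy', one_smul]
    refine ⟨⟪x, y⟫ * v ^ 2, hyw, ?_⟩
    generalize ⟪x, y⟫ = b at *
    rw [e2, hr, hyw]
    match_scalars <;> field_simp <;> ring
  · rintro ⟨lam, hyw, hx⟩
    have hr : ‖y‖ = -1 / v := by
      rw [hyw, norm_smul, hw, mul_one, Real.norm_eq_abs, abs_of_pos]
      exact div_pos_of_neg_of_neg (by norm_num) hv
    have hb : ⟪x, y⟫ = lam / v ^ 2 := by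
      rw [hyw, hx, inner_smul_left, inner_smul_right, inner_sub_left, inner_smul_left,
        real_inner_comm, hwV, real_inner_self_eq_norm_sq, hw]
      simp
      field_simp
    have l1 := aux_lim1 x y hy
    have l2 := aux_lim2 x y hy
    refine ⟨?_, ?_⟩
    · convert l1 using 3
      rw [hr, hyw]
      match_scalars; field_simp
    · convert l2 using 3
      · rw [hb, hr, hyw, hx]
        match_scalars <;> field_simp <;> ring
      · rw [hr]; field_simp

/-- For `w` a unit vector, `V ⟂ w` and `v < 0`, a pair `(x, y)` with
`y ≠ 0` satisfies the limiting conditions (i) at the equator point `(w, 0)` iff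
`y = (−1/v)•w` and `x = (1/v)•(V − λ•w)` for some `λ ∈ ℝ`; consequently the set of all
such pairs is exactly this one-parameter family. -/
theorem stmt_19 (n : ℕ) (hn : 1 ≤ n)
    (w V : EuclideanSpace ℝ (Fin n)) (hw : ‖w‖ = 1) (hwV : ⟪w, V⟫ = 0)
    (v : ℝ) (hv : v < 0) :
    (∀ x y : EuclideanSpace ℝ (Fin n), y ≠ 0 →
      (TendsCond n w V v x y ↔
        ∃ lam : ℝ, y = (-1 / v) • w ∧ x = (1 / v) • (V - lam • w))) ∧
    {q : EuclideanSpace ℝ (Fin n) × EuclideanSpace ℝ (Fin n) |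
        q.2 ≠ 0 ∧ TendsCond n w V v q.1 q.2} =
      {q : EuclideanSpace ℝ (Fin n) × EuclideanSpace ℝ (Fin n) |
        ∃ lam : ℝ, q = ((1 / v) • (V - lam • w), (-1 / v) • w)} := by
  refine ⟨fun x y hy => aux_iff w V hw hwV v hv x y hy, ?_⟩
  ext ⟨x, y⟩
  simp only [Set.mem_ofPred_eq, Prod.mk.injEq]
  constructor
  · rintro ⟨hy, h⟩
    obtain ⟨lam, h1, h2⟩ := (aux_iff w V hw hwV v hv x y hy).1 h
    exact ⟨lam, h2, h1⟩
  · rintro ⟨lam, h2, h1⟩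
    have hy : y ≠ 0 := by
      rw [h1]
      refine smul_ne_zero (div_ne_zero (by norm_num) hv.ne) ?_
      rintro rfl
      simp at hw
    exact ⟨hy, (aux_iff w V hw hwV v hv x y hy).2 ⟨lam, h1, h2⟩⟩

end
end
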